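/- arXiv:2605.24668 — 3 statements merged into one kernel-verified Lean document; each statement's English description precedes it below -/
import Mathlib

section
/- Let G be a unicyclic graph with unique cycle C, and let F = G − V(C) be the graph obtained by deleting all vertices of C. Then the characteristic polynomial of the adjacency matrix of G satisfies φ_G(x) = μ_G(x) − 2·μ_F(x), where μ_H denotes the matching polynomial. -/
variable {V : Type*}

/-- Number of matchings of size `j` in `H` (sets of `j` pairwise vertex-disjoint edges). -/
noncomputable def mcount (H : SimpleGraph V) (j : ℕ) : ℕ :=
  Set.ncard {M : Finset (Sym2 V) | (∀ e ∈ M, e ∈ H.edgeSet) ∧ M.card = j ∧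
    ∀ e ∈ M, ∀ f ∈ M, e ≠ f → ∀ v : V, ¬(v ∈ e ∧ v ∈ f)}

/-- The matching polynomial of `H`, as a function on `ℂ`. -/
noncomputable def matchPolyFun [Fintype V] (H : SimpleGraph V) (x : ℂ) : ℂ :=
  ∑ j ∈ Finset.range (Fintype.card V / 2 + 1),
    (-1 : ℂ) ^ j * (mcount H j : ℂ) * x ^ (Fintype.card V - 2 * j)

/-- The characteristic polynomial `det (x • 1 - A(G))` of the adjacency matrix, as a function. -/
noncomputable def charFun [Fintype V] [DecidableEq V] (G : SimpleGraph V)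
    [DecidableRel G.Adj] (x : ℂ) : ℂ :=
  (x • (1 : Matrix V V ℂ) - G.adjMatrix ℂ).det

/-- The adjacency matrix of a graph is Hermitian (symmetric). -/
theorem adjHerm [Fintype V] [DecidableEq V] (G : SimpleGraph V) [DecidableRel G.Adj] :
    (G.adjMatrix ℝ).IsHermitian := by
  rw [Matrix.IsHermitian, Matrix.conjTranspose_eq_transpose_of_trivial]
  exact SimpleGraph.isSymm_adjMatrix G

/-- Positive square energy. -/
noncomputable def sPlus [Fintype V] [DecidableEq V] (G : SimpleGraph V) [DecidableRel G.Adj] : ℝ :=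
  ∑ i, if 0 < (adjHerm G).eigenvalues i then ((adjHerm G).eigenvalues i) ^ 2 else 0

/-- Negative square energy. -/
noncomputable def sMinus [Fintype V] [DecidableEq V] (G : SimpleGraph V) [DecidableRel G.Adj] : ℝ :=
  ∑ i, if (adjHerm G).eigenvalues i < 0 then ((adjHerm G).eigenvalues i) ^ 2 else 0

/-!
Expanding `det (X - A)` over permutations, only those moving each vertex along an edge contribute,
and each contributes `(-1) ^ (number of nontrivial cycles) * X ^ (number of fixed points)` (Sachs).
The involutions among them are the matchings and sum to the matching polynomial. A permutation
crossing a bridge must cross it straight back, so on a graph with a single cycle `C` a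
non-involution has to run through `C`, in one of its two orientations. Removing this cycle flips the
sign and leaves an arbitrary term of the expansion for the forest `F = G - C`; each orientation thus
contributes `-φ_F`, and `φ_F = μ_F` because a forest has no non-involutions.
-/

section EdgePerms

open Equiv Finset Polynomial

variable [Fintype V] [DecidableEq V]

/-- The permutations that move every non-fixed vertex along an edge of `G`. They encode the spanning
elementary subgraphs of Sachs' theorem: 2-cycles are single edges, longer cycles are oriented cycles
of `G`. -/
def edgePerms (G : SimpleGraph V) [DecidableRel G.Adj] : Finset (Perm V) :=
  {σ | ∀ v, σ v ≠ v → G.Adj v (σ v)}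

section

variable {G : SimpleGraph V} [DecidableRel G.Adj] {σ τ : Perm V}

@[simp]
lemma mem_edgePerms : σ ∈ edgePerms G ↔ ∀ v, σ v ≠ v → G.Adj v (σ v) := by
  simp [edgePerms]

lemma inv_mem_edgePerms (h : σ ∈ edgePerms G) : σ⁻¹ ∈ edgePerms G := by
  rw [mem_edgePerms] at h ⊢
  intro v hv
  simpa using (h (σ⁻¹ v) (by simpa using hv.symm)).symm

lemma mul_mem_edgePerms_iff_of_disjoint (h : σ.Disjoint τ) :
    σ * τ ∈ edgePerms G ↔ σ ∈ edgePerms G ∧ τ ∈ edgePerms G := by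
  simp only [mem_edgePerms, ← forall_and]
  refine forall_congr' fun v => ?_
  rcases h v with hσ | hτ
  · rw [h.commute.eq, Perm.mul_apply, hσ]
    simp
  · rw [Perm.mul_apply, hτ]
    simp

lemma ofSubtype_mem_edgePerms_iff {s : Set V} [Fintype s] [DecidablePred (· ∈ s)]
    {ρ : Perm s} : Perm.ofSubtype ρ ∈ edgePerms G ↔ ρ ∈ edgePerms (G.induce s) := by
  simp only [mem_edgePerms]
  refine ⟨fun h v hv => ?_, fun h v hv => ?_⟩
  · simpa [Perm.ofSubtype_apply_coe] using
      h v (by simpa [Perm.ofSubtype_apply_coe, Subtype.ext_iff] using hv)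
  · by_cases hvs : v ∈ s
    · rw [Perm.ofSubtype_apply_of_mem ρ hvs] at hv ⊢
      exact h ⟨v, hvs⟩ (mt (congrArg Subtype.val) hv)
    · exact absurd (Perm.ofSubtype_apply_of_not_mem ρ hvs) hv

end

/-- The contribution of `σ` to Sachs' expansion of the characteristic polynomial of a graph:
a sign for each nontrivial cycle, and a factor `X` for each fixed point. -/
noncomputable def sachsTerm (R : Type*) [CommRing R] (σ : Perm V) : R[X] :=
  (-1) ^ σ.cycleType.card * X ^ (Fintype.card V - #σ.support)

variable {R : Type*} [CommRing R]

lemma prod_charmatrix_adjMatrix_of_mem_edgePerms {G : SimpleGraph V} [DecidableRel G.Adj]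
    {σ : Perm V} (h : σ ∈ edgePerms G) :
    ∏ v, (G.adjMatrix R).charmatrix (σ v) v =
      (-1) ^ #σ.support * X ^ (Fintype.card V - #σ.support) := by
  have entry (v : V) :
      (G.adjMatrix R).charmatrix (σ v) v = if v ∈ σ.support then -1 else X := by
    by_cases hv : σ v = v
    · simp [hv]
    · simp [hv, (mem_edgePerms.1 h v hv).symm]
  simp only [entry, prod_ite, prod_const, filter_mem_eq_inter, univ_inter, filter_notMem_eq_sdiff,
    card_univ_sdiff]

lemma prod_charmatrix_adjMatrix_of_notMem_edgePerms {G : SimpleGraph V} [DecidableRel G.Adj]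
    {σ : Perm V} (h : σ ∉ edgePerms G) : ∏ v, (G.adjMatrix R).charmatrix (σ v) v = 0 := by
  simp only [mem_edgePerms, not_forall] at h
  obtain ⟨v, hv, hadj⟩ := h
  refine prod_eq_zero (mem_univ v) ?_
  simp [hv, G.adj_comm (σ v) v, hadj]

theorem charpoly_adjMatrix_eq_sum_sachsTerm (G : SimpleGraph V) [DecidableRel G.Adj] :
    (G.adjMatrix R).charpoly = ∑ σ ∈ edgePerms G, sachsTerm R σ := by
  rw [Matrix.charpoly, Matrix.det_apply',
    ← sum_subset (subset_univ (edgePerms G)) fun σ _ hσ => by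
      rw [prod_charmatrix_adjMatrix_of_notMem_edgePerms hσ, mul_zero]]
  refine sum_congr rfl fun σ hσ => ?_
  rw [prod_charmatrix_adjMatrix_of_mem_edgePerms hσ, sachsTerm, Perm.sign_of_cycleType,
    Perm.sum_cycleType, pow_add]
  have hsq : ((-1) ^ #σ.support * (-1) ^ #σ.support : R[X]) = 1 := by simp [← mul_pow]
  push_cast
  linear_combination ((-1) ^ σ.cycleType.card * X ^ (Fintype.card V - #σ.support)) * hsq

lemma sachsTerm_mul_of_disjoint_of_isCycle {σ τ : Perm V} (h : σ.Disjoint τ) (hτ : τ.IsCycle) :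
    sachsTerm R (σ * τ) =
      -((-1) ^ σ.cycleType.card * X ^ (Fintype.card V - #τ.support - #σ.support)) := by
  rw [sachsTerm, h.cycleType_mul, hτ.cycleType, h.card_support_mul, Multiset.card_add,
    Multiset.card_singleton, pow_succ, add_comm, ← Nat.sub_sub]
  ring

end EdgePerms

section Matchings

open Equiv Finset Polynomial

/-- `M` is a matching of `H`, given by its set of edges. -/
def IsEdgeMatching (H : SimpleGraph V) (M : Finset (Sym2 V)) : Prop :=
  (∀ e ∈ M, e ∈ H.edgeSet) ∧ ∀ e ∈ M, ∀ f ∈ M, e ≠ f → ∀ v : V, ¬(v ∈ e ∧ v ∈ f)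

lemma IsEdgeMatching.eq_of_mk_mem {H : SimpleGraph V} {M : Finset (Sym2 V)}
    (hM : IsEdgeMatching H M) {a b d : V} (hb : s(a, b) ∈ M) (hd : s(a, d) ∈ M) : b = d := by
  by_contra hne
  exact hM.2 _ hb _ hd (mt Sym2.congr_right.1 hne) a
    ⟨Sym2.mem_mk_left a b, Sym2.mem_mk_left a d⟩

lemma IsEdgeMatching.exists_involutive {H : SimpleGraph V} {M : Finset (Sym2 V)}
    (hM : IsEdgeMatching H M) :
    ∃ f : V → V, f.Involutive ∧ ∀ a b, s(a, b) ∈ M ↔ a ≠ b ∧ f a = b := by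
  have partner (a : V) : ∃ b, s(a, b) ∈ M ∨ a = b ∧ ∀ d, s(a, d) ∉ M := by
    by_cases h : ∃ b, s(a, b) ∈ M
    · exact h.imp fun _ => Or.inl
    · exact ⟨a, Or.inr ⟨rfl, not_exists.1 h⟩⟩
  choose f hf using partner
  have mk_mem_iff (a b : V) : s(a, b) ∈ M ↔ a ≠ b ∧ f a = b := by
    constructor
    · intro hab
      refine ⟨(hM.1 _ hab : H.Adj a b).ne, ?_⟩
      rcases hf a with h | ⟨-, h⟩
      · exact hM.eq_of_mk_mem h hab
      · exact absurd hab (h b)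
    · rintro ⟨hne, rfl⟩
      exact (hf a).resolve_right fun h => hne h.1
  refine ⟨f, fun a => ?_, mk_mem_iff⟩
  rcases eq_or_ne a (f a) with ha | ha
  · rw [← ha, ← ha]
  · exact ((mk_mem_iff _ _).1 (Sym2.eq_swap ▸ (mk_mem_iff a (f a)).2 ⟨ha, rfl⟩)).2

lemma sq_eq_one_iff_involutive {σ : Perm V} : σ ^ 2 = 1 ↔ Function.Involutive σ := by
  simp [Perm.ext_iff, sq, Function.Involutive]

variable [Fintype V] [DecidableEq V] {σ : Perm V}

/-- The pairs `{v, σ v}` with `σ v ≠ v`. For an involution `σ` these are its transpositions, and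
`σ ↦ movedPairs σ` is the correspondence between involutions and matchings. -/
def movedPairs (σ : Perm V) : Finset (Sym2 V) :=
  σ.support.image fun v => s(v, σ v)

lemma mk_mem_movedPairs_iff (hσ : Function.Involutive σ) {a b : V} :
    s(a, b) ∈ movedPairs σ ↔ a ≠ b ∧ σ a = b := by
  simp only [movedPairs, mem_image, Perm.mem_support, Sym2.eq_iff]
  constructor
  · rintro ⟨v, hv, ⟨rfl, rfl⟩ | ⟨rfl, rfl⟩⟩
    · exact ⟨hv.symm, rfl⟩
    · exact ⟨hv, hσ v⟩
  · rintro ⟨hne, rfl⟩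
    exact ⟨a, hne.symm, Or.inl ⟨rfl, rfl⟩⟩

lemma two_mul_card_cycleType_of_sq_eq_one (hσ : σ ^ 2 = 1) :
    2 * σ.cycleType.card = #σ.support := by
  rw [← Perm.sum_cycleType, Perm.cycleType_of_pow_prime_eq_one hσ]
  simp [mul_comm]

lemma card_movedPairs (hσ : σ ^ 2 = 1) : #(movedPairs σ) = σ.cycleType.card := by
  have hinv : Function.Involutive σ := sq_eq_one_iff_involutive.1 hσ
  have fiber (v : V) (hv : v ∈ σ.support) :
      {w ∈ σ.support | s(w, σ w) = s(v, σ v)} = {v, σ v} := by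
    ext w
    simp only [mem_filter, Perm.mem_support, Sym2.eq_iff, mem_insert, mem_singleton] at hv ⊢
    have := hinv v
    grind
  have card_fiber : ∀ e ∈ movedPairs σ, #{w ∈ σ.support | s(w, σ w) = e} = 2 := by
    intro e he
    obtain ⟨v, hv, rfl⟩ := mem_image.1 he
    rw [fiber v hv, card_pair (Perm.mem_support.1 hv).symm]
  have hcard : #σ.support = #(movedPairs σ) * 2 :=
    (card_eq_sum_card_image _ _).trans (sum_const_nat card_fiber)
  have := two_mul_card_cycleType_of_sq_eq_one hσ
  omega

lemma isEdgeMatching_movedPairs {G : SimpleGraph V} [DecidableRel G.Adj] (h : σ ∈ edgePerms G)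
    (hσ : Function.Involutive σ) : IsEdgeMatching G (movedPairs σ) := by
  constructor
  · rintro ⟨a, b⟩ hab
    obtain ⟨hne, rfl⟩ := (mk_mem_movedPairs_iff hσ).1 hab
    exact mem_edgePerms.1 h a hne.symm
  · rintro e he f hf hne v ⟨⟨a, rfl⟩, ⟨b, rfl⟩⟩
    rw [mk_mem_movedPairs_iff hσ] at he hf
    exact hne (by rw [← he.2, ← hf.2])

lemma movedPairs_bijOn (G : SimpleGraph V) [DecidableRel G.Adj] (j : ℕ) :
    Set.BijOn movedPairs {σ | σ ∈ edgePerms G ∧ σ ^ 2 = 1 ∧ σ.cycleType.card = j}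
      {M | IsEdgeMatching G M ∧ #M = j} := by
  refine ⟨?mapsTo, ?injOn, ?surjOn⟩
  case mapsTo =>
    rintro σ ⟨hG, hσ, rfl⟩
    exact ⟨isEdgeMatching_movedPairs hG (sq_eq_one_iff_involutive.1 hσ), card_movedPairs hσ⟩
  case injOn =>
    rintro σ ⟨-, hσ, -⟩ τ ⟨-, hτ, -⟩ h
    rw [sq_eq_one_iff_involutive] at hσ hτ
    have key (a b : V) : a ≠ b ∧ σ a = b ↔ a ≠ b ∧ τ a = b := by
      rw [← mk_mem_movedPairs_iff hσ, ← mk_mem_movedPairs_iff hτ, h]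
    ext a
    have := key a (σ a)
    have := key a (τ a)
    grind
  case surjOn =>
    rintro M ⟨hM, rfl⟩
    obtain ⟨f, hf, mk_mem_iff⟩ := hM.exists_involutive
    have hsq : hf.toPerm ^ 2 = 1 := sq_eq_one_iff_involutive.2 hf
    have hpairs : movedPairs hf.toPerm = M := by
      ext ⟨a, b⟩
      exact (mk_mem_movedPairs_iff hf).trans (mk_mem_iff a b).symm
    refine ⟨hf.toPerm, ⟨mem_edgePerms.2 fun v hv => ?_, hsq, ?_⟩, hpairs⟩
    · exact hM.1 _ ((mk_mem_iff _ _).2 ⟨hv.symm, rfl⟩)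
    · rw [← card_movedPairs hsq, hpairs]

lemma mcount_eq_card_filter_edgePerms (G : SimpleGraph V) [DecidableRel G.Adj] (j : ℕ) :
    mcount G j = #{σ ∈ edgePerms G | σ ^ 2 = 1 ∧ σ.cycleType.card = j} := by
  have matchings_eq : {M : Finset (Sym2 V) | (∀ e ∈ M, e ∈ G.edgeSet) ∧ #M = j ∧
      ∀ e ∈ M, ∀ f ∈ M, e ≠ f → ∀ v : V, ¬(v ∈ e ∧ v ∈ f)} =
      {M | IsEdgeMatching G M ∧ #M = j} := by
    ext M
    simp only [IsEdgeMatching, Set.mem_ofPred_eq]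
    tauto
  rw [mcount, matchings_eq, ← (movedPairs_bijOn G j).image_eq,
    (movedPairs_bijOn G j).injOn.ncard_image, ← Set.ncard_coe_finset, coe_filter]

/-- The matching polynomial of `H` over `R`. -/
noncomputable def matchPoly (R : Type*) [CommRing R] (H : SimpleGraph V) : R[X] :=
  ∑ j ∈ range (Fintype.card V / 2 + 1),
    (-1) ^ j * (mcount H j : R[X]) * X ^ (Fintype.card V - 2 * j)

variable {R : Type*} [CommRing R]

theorem matchPoly_eq_sum_sachsTerm (G : SimpleGraph V) [DecidableRel G.Adj] :
    matchPoly R G = ∑ σ ∈ edgePerms G with σ ^ 2 = 1, sachsTerm R σ := by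
  have card_mem_range : ∀ σ ∈ {σ ∈ edgePerms G | σ ^ 2 = 1},
      σ.cycleType.card ∈ range (Fintype.card V / 2 + 1) := by
    intro σ hσ
    have := two_mul_card_cycleType_of_sq_eq_one (mem_filter.1 hσ).2
    have := card_le_univ σ.support
    rw [mem_range]
    omega
  rw [matchPoly, ← sum_fiberwise_of_maps_to card_mem_range]
  refine sum_congr rfl fun j _ => ?_
  have term_eq : ∀ σ ∈ {σ ∈ edgePerms G | σ ^ 2 = 1 ∧ σ.cycleType.card = j},
      sachsTerm R σ = (-1) ^ j * X ^ (Fintype.card V - 2 * j) := by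
    intro σ hσ
    obtain ⟨-, hsq, rfl⟩ := mem_filter.1 hσ
    rw [sachsTerm, two_mul_card_cycleType_of_sq_eq_one hsq]
  rw [filter_filter, sum_congr rfl term_eq, sum_const, nsmul_eq_mul,
    mcount_eq_card_filter_edgePerms]
  ring

end Matchings

section Bridges

open Equiv Equiv.Perm Finset

lemma apply_apply_eq_of_isBridge [Fintype V] [DecidableEq V] {G : SimpleGraph V}
    [DecidableRel G.Adj] {σ : Perm V} (hσ : σ ∈ edgePerms G) {v : V}
    (hb : G.IsBridge s(v, σ v)) : σ (σ v) = v := by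
  by_contra hne
  -- The side of the bridge containing `σ v` is closed under `σ`, hence under `σ⁻¹`.
  let side : Set V := {w | (G.deleteEdges {s(v, σ v)}).Reachable (σ v) w}
  have notMem_side : v ∉ side := fun h => SimpleGraph.isBridge_iff.1 hb h.symm
  have mapsTo_side : Set.MapsTo σ side side := by
    intro w hw
    by_cases hfix : σ w = w
    · rwa [hfix]
    · refine hw.trans (SimpleGraph.Adj.reachable ?_)
      rw [SimpleGraph.deleteEdges_adj, Set.mem_singleton_iff, Sym2.eq_iff]
      refine ⟨mem_edgePerms.1 hσ w hfix, ?_⟩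
      rintro (⟨rfl, -⟩ | ⟨rfl, h⟩)
      · exact notMem_side hw
      · exact hne h
  exact notMem_side <| by
    simpa using perm_symm_mapsTo_of_mapsTo σ mapsTo_side (SimpleGraph.Reachable.refl (σ v))

theorem charpoly_adjMatrix_eq_matchPoly_of_isAcyclic {R : Type*} [CommRing R] [Fintype V]
    [DecidableEq V] {G : SimpleGraph V} [DecidableRel G.Adj] (hG : G.IsAcyclic) :
    (G.adjMatrix R).charpoly = matchPoly R G := by
  rw [charpoly_adjMatrix_eq_sum_sachsTerm, matchPoly_eq_sum_sachsTerm, filter_true_of_mem]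
  intro σ hσ
  refine sq_eq_one_iff_involutive.2 fun v => ?_
  by_cases hv : σ v = v
  · rw [hv, hv]
  · exact apply_apply_eq_of_isBridge hσ
      (SimpleGraph.isAcyclic_iff_forall_adj_isBridge.1 hG (mem_edgePerms.1 hσ v hv))

end Bridges

section CycleFactors

open Equiv Finset Polynomial

variable [Fintype V] [DecidableEq V] {σ τ : Perm V}

lemma disjoint_ofSubtype_compl_support (ρ : Perm ↑((τ.supportᶜ : Finset V) : Set V)) :
    (Perm.ofSubtype ρ).Disjoint τ := by
  intro v
  by_cases hv : τ v = v
  · exact Or.inr hv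
  · exact Or.inl (Perm.ofSubtype_apply_of_not_mem ρ (by simpa using hv))

lemma mem_cycleFactorsFinset_iff_exists_ofSubtype_mul (hτ : τ.IsCycle) :
    τ ∈ σ.cycleFactorsFinset ↔
      ∃ ρ : Perm ↑((τ.supportᶜ : Finset V) : Set V), Perm.ofSubtype ρ * τ = σ := by
  constructor
  · intro h
    have hdisj := Perm.disjoint_mul_inv_of_mem_cycleFactorsFinset h
    obtain ⟨ρ, hρ⟩ : σ * τ⁻¹ ∈
        (Perm.ofSubtype : Perm ↑((τ.supportᶜ : Finset V) : Set V) →* Perm V).range := by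
      rw [Perm.mem_range_ofSubtype_iff]
      intro v hv
      simpa using (hdisj v).resolve_left (Perm.mem_support.1 hv)
    exact ⟨ρ, by rw [hρ, inv_mul_cancel_right]⟩
  · rintro ⟨ρ, rfl⟩
    rw [(disjoint_ofSubtype_compl_support ρ).cycleFactorsFinset_mul_eq_union,
      hτ.cycleFactorsFinset_eq_singleton]
    simp

lemma mem_cycleFactorsFinset_of_apply_eq (hτ : τ.IsCycle)
    (h : ∀ v, σ (σ v) ≠ v → τ v = σ v ∨ τ (σ v) = v) {v : V} (hv : σ (σ v) ≠ v)
    (hvτ : τ v = σ v) : τ ∈ σ.cycleFactorsFinset := by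
  -- Having taken one step along `τ`, `σ` never turns back and follows `τ` all the way around.
  have follows (k : ℕ) :
      τ ((τ ^ k) v) = σ ((τ ^ k) v) ∧ σ (σ ((τ ^ k) v)) ≠ (τ ^ k) v := by
    induction k with
    | zero => exact ⟨hvτ, hv⟩
    | succ k ih =>
      obtain ⟨hw, hσw⟩ := ih
      rw [pow_succ', Perm.mul_apply]
      set w := (τ ^ k) v
      have hne : σ (σ (σ w)) ≠ σ w := fun e => hσw (σ.injective e)
      rw [hw]
      refine ⟨(h _ hne).resolve_right fun e => hσw (τ.injective (e.trans hw.symm)), hne⟩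
  have hmoved : τ v ≠ v := fun e => hv (by rw [← hvτ, e, ← hvτ, e])
  refine Perm.mem_cycleFactorsFinset_iff.2 ⟨hτ, fun w hw => ?_⟩
  obtain ⟨k, rfl⟩ := hτ.exists_pow_eq hmoved (Perm.mem_support.1 hw)
  exact (follows k).1

lemma mem_cycleFactorsFinset_or_inv_mem (hτ : τ.IsCycle)
    (h : ∀ v, σ (σ v) ≠ v → τ v = σ v ∨ τ (σ v) = v) (hσ : σ ^ 2 ≠ 1) :
    τ ∈ σ.cycleFactorsFinset ∨ τ⁻¹ ∈ σ.cycleFactorsFinset := by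
  obtain ⟨v, hv⟩ : ∃ v, σ (σ v) ≠ v := by
    simpa [sq_eq_one_iff_involutive, Function.Involutive] using hσ
  refine (h v hv).imp (mem_cycleFactorsFinset_of_apply_eq hτ h hv) fun hvτ => ?_
  refine mem_cycleFactorsFinset_of_apply_eq hτ.inv (fun w hw => ?_) hv ?_
  · simp only [Perm.inv_eq_iff_eq]
    exact (h w hw).symm.imp Eq.symm Eq.symm
  · rw [Perm.inv_eq_iff_eq, hvτ]

lemma sq_eq_one_of_mem_cycleFactorsFinset (h : τ ∈ σ.cycleFactorsFinset) (hσ : σ ^ 2 = 1) :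
    τ ^ 2 = 1 := by
  rw [sq_eq_one_iff_involutive] at hσ ⊢
  intro v
  by_cases hv : v ∈ τ.support
  · have agree := (Perm.mem_cycleFactorsFinset_iff.1 h).2
    rw [agree _ (Perm.apply_mem_support.2 hv), agree v hv, hσ]
  · rw [Perm.notMem_support.1 hv, Perm.notMem_support.1 hv]

lemma sq_eq_one_of_inv_mem_cycleFactorsFinset (h : τ ∈ σ.cycleFactorsFinset)
    (hinv : τ⁻¹ ∈ σ.cycleFactorsFinset) : τ ^ 2 = 1 := by
  rw [sq, mul_eq_one_iff_eq_inv]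
  by_contra hne
  have hdisj : τ.Disjoint τ⁻¹ := Perm.cycleFactorsFinset_pairwise_disjoint σ h hinv hne
  rw [Perm.disjoint_inv_right_iff, Perm.disjoint_refl_iff] at hdisj
  exact (Perm.mem_cycleFactorsFinset_iff.1 h).1.ne_one hdisj

variable {R : Type*} [CommRing R] {G : SimpleGraph V} [DecidableRel G.Adj]

theorem sum_sachsTerm_filter_mem_cycleFactorsFinset (hτ : τ.IsCycle) (hG : τ ∈ edgePerms G) :
    ∑ σ ∈ edgePerms G with τ ∈ σ.cycleFactorsFinset, sachsTerm R σ =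
      -((G.induce ↑(τ.support)ᶜ).adjMatrix R).charpoly := by
  rw [charpoly_adjMatrix_eq_sum_sachsTerm, ← sum_neg_distrib]
  symm
  refine sum_bij (fun ρ _ => Perm.ofSubtype ρ * τ) ?_ ?_ ?_ ?_
  · intro ρ hρ
    rw [mem_filter, mul_mem_edgePerms_iff_of_disjoint (disjoint_ofSubtype_compl_support ρ),
      ofSubtype_mem_edgePerms_iff, mem_cycleFactorsFinset_iff_exists_ofSubtype_mul hτ]
    exact ⟨⟨hρ, hG⟩, ρ, rfl⟩
  · intro ρ _ ρ' _ h
    exact Perm.ofSubtype_injective (mul_right_cancel h)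
  · intro σ hσ
    rw [mem_filter, mem_cycleFactorsFinset_iff_exists_ofSubtype_mul hτ] at hσ
    obtain ⟨hmem, ρ, rfl⟩ := hσ
    rw [mul_mem_edgePerms_iff_of_disjoint (disjoint_ofSubtype_compl_support ρ),
      ofSubtype_mem_edgePerms_iff] at hmem
    exact ⟨ρ, hmem.1, rfl⟩
  · intro ρ _
    have card_compl_support :
        Fintype.card ↑((τ.supportᶜ : Finset V) : Set V) = Fintype.card V - #τ.support :=
      (Fintype.card_coe _).trans (card_compl _)
    rw [sachsTerm_mul_of_disjoint_of_isCycle (disjoint_ofSubtype_compl_support ρ) hτ, sachsTerm,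
      card_compl_support, Perm.cycleType_ofSubtype, Perm.support_ofSubtype, card_map]
    congr!

theorem charpoly_adjMatrix_eq_sub_of_mem_cycleFactorsFinset (hτ : τ.IsCycle)
    (hτ2 : τ ^ 2 ≠ 1) (hG : τ ∈ edgePerms G)
    (h : ∀ σ ∈ edgePerms G, σ ^ 2 ≠ 1 → τ ∈ σ.cycleFactorsFinset ∨ τ⁻¹ ∈ σ.cycleFactorsFinset) :
    (G.adjMatrix R).charpoly =
      matchPoly R G - 2 * ((G.induce ↑(τ.support)ᶜ).adjMatrix R).charpoly := by
  have τ_inv_sq : τ⁻¹ ^ 2 ≠ 1 := by rwa [inv_pow, inv_ne_one]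
  have filter_sq_ne_one : {σ ∈ edgePerms G | ¬σ ^ 2 = 1} =
      {σ ∈ edgePerms G | τ ∈ σ.cycleFactorsFinset} ∪
        {σ ∈ edgePerms G | τ⁻¹ ∈ σ.cycleFactorsFinset} := by
    rw [← filter_or]
    refine filter_congr fun σ hσ => ⟨h σ hσ, ?_⟩
    rintro (hmem | hmem) hsq
    · exact hτ2 (sq_eq_one_of_mem_cycleFactorsFinset hmem hsq)
    · exact τ_inv_sq (sq_eq_one_of_mem_cycleFactorsFinset hmem hsq)
  have disj : _root_.Disjoint {σ ∈ edgePerms G | τ ∈ σ.cycleFactorsFinset}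
      {σ ∈ edgePerms G | τ⁻¹ ∈ σ.cycleFactorsFinset} :=
    disjoint_filter.2 fun σ _ hmem hinv =>
      hτ2 (sq_eq_one_of_inv_mem_cycleFactorsFinset hmem hinv)
  have inv_sum := sum_sachsTerm_filter_mem_cycleFactorsFinset (R := R) hτ.inv (inv_mem_edgePerms hG)
  rw [Perm.support_inv] at inv_sum
  rw [charpoly_adjMatrix_eq_sum_sachsTerm G, ← sum_filter_add_sum_filter_not _ (fun σ => σ ^ 2 = 1),
    ← matchPoly_eq_sum_sachsTerm, filter_sq_ne_one, sum_union disj, inv_sum,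
    sum_sachsTerm_filter_mem_cycleFactorsFinset hτ hG]
  ring

end CycleFactors

section UniqueCycle

open Equiv Finset

variable {G : SimpleGraph V} {v : V} {c : G.Walk v v}

lemma mem_edges_of_not_isBridge
    (hunique : ∀ ⦃w : V⦄ (d : G.Walk w w), d.IsCycle → d.edges ⊆ c.edges) {e : Sym2 V}
    (he : e ∈ G.edgeSet) (hb : ¬G.IsBridge e) : e ∈ c.edges := by
  rw [SimpleGraph.isBridge_iff_forall_cycle_notMem he] at hb
  push Not at hb
  obtain ⟨w, d, hd, hed⟩ := hb
  exact hunique d hd hed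

lemma isAcyclic_induce_of_disjoint_support
    (hunique : ∀ ⦃w : V⦄ (d : G.Walk w w), d.IsCycle → d.edges ⊆ c.edges) {s : Set V}
    (hs : ∀ u ∈ s, u ∉ c.support) : (G.induce s).IsAcyclic := by
  intro u d hd
  have hmap : (d.map (SimpleGraph.Embedding.induce s).toHom).IsCycle :=
    hd.map Subtype.val_injective
  have hedge := hunique _ hmap (SimpleGraph.Walk.mk_start_snd_mem_edges hmap.not_nil)
  exact hs _ u.2 (c.fst_mem_support_of_mem_edges hedge)

lemma edges_subset_edges_of_connected_of_card_eq [Fintype V] [Fintype G.edgeSet]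
    (hconn : G.Connected) (hcard : #G.edgeFinset = Fintype.card V) (hc : c.IsCycle) {w : V}
    {d : G.Walk w w} (hd : d.IsCycle) : d.edges ⊆ c.edges := by
  rintro ⟨a, b⟩ hab_mem
  by_contra notMem
  have hab : s(a, b) ∈ G.edgeSet := d.edges_subset_edgeSet hab_mem
  have not_bridge : ¬G.IsBridge s(a, b) := fun hb =>
    (SimpleGraph.isBridge_iff_forall_cycle_notMem hab).1 hb d hd hab_mem
  have isTree_delete : (G.deleteEdges {s(a, b)}).IsTree := by
    refine SimpleGraph.isTree_iff_connected_and_card.2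
      ⟨hconn.connected_delete_edge_of_not_isBridge not_bridge, ?_⟩
    rw [SimpleGraph.edgeSet_deleteEdges, Nat.card_coe_set_eq,
      Set.ncard_sdiff_singleton_add_one hab (Set.toFinite _), Nat.card_eq_fintype_card, ← hcard,
      ← SimpleGraph.coe_edgeFinset, Set.ncard_coe_finset]
  refine isTree_delete.isAcyclic _ (hc.toDeleteEdges G {s(a, b)} ?_)
  rintro e he rfl
  exact notMem he

variable [DecidableEq V]

/-- The permutation that advances every vertex of a cycle `c` one step along `c` and fixes all other
vertices. Since `c.support` lists the base point twice, the cyclic list of vertices is its tail. -/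
def cyclePerm (c : G.Walk v v) : Perm V :=
  c.support.tail.formPerm

lemma cyclePerm_getVert (hc : c.IsCycle) {k : ℕ} (hk : k < c.length) :
    cyclePerm c (c.getVert k) = c.getVert (k + 1) := by
  have length_tail : c.support.tail.length = c.length := by simp
  have getVert_succ {i : ℕ} (hi : i < c.support.tail.length) :
      c.getVert (i + 1) = c.support.tail[i] := by
    rw [c.getVert_eq_support_getElem (by lia), List.getElem_tail]
  have step {i : ℕ} (hi : i < c.support.tail.length) :=
    List.formPerm_apply_getElem _ hc.support_nodup i hi
  rw [cyclePerm, getVert_succ (length_tail ▸ hk)]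
  rcases k with _ | k
  · obtain ⟨n, hn⟩ : ∃ n, c.length = n + 1 := ⟨c.length - 1, by lia⟩
    have base : c.getVert 0 = c.getVert (n + 1) := by
      rw [← hn, c.getVert_zero, c.getVert_length]
    rw [base, getVert_succ (by lia), step]
    simp only [length_tail, hn, Nat.mod_self]
  · rw [getVert_succ (by lia), step]
    simp only [length_tail, Nat.mod_eq_of_lt hk]

lemma cyclePerm_apply_eq_or_of_mem_edges (hc : c.IsCycle) {a b : V} (h : s(a, b) ∈ c.edges) :
    cyclePerm c a = b ∨ cyclePerm c b = a := by
  obtain ⟨k, hk, he⟩ := c.mk_mem_edges_iff_exists.1 h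
  rcases Sym2.eq_iff.1 he with ⟨rfl, rfl⟩ | ⟨rfl, rfl⟩
  · exact Or.inl (cyclePerm_getVert hc hk)
  · exact Or.inr (cyclePerm_getVert hc hk)

lemma isCycle_cyclePerm (hc : c.IsCycle) : (cyclePerm c).IsCycle := by
  refine List.isCycle_formPerm hc.support_nodup ?_
  have := hc.three_le_length
  simp only [List.length_tail, SimpleGraph.Walk.length_support]
  lia

lemma cyclePerm_sq_ne_one (hc : c.IsCycle) : cyclePerm c ^ 2 ≠ 1 := by
  intro h
  have three_le := hc.three_le_length
  have getVert_two : c.getVert 2 = c.getVert 0 := by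
    rw [← cyclePerm_getVert hc (by lia : 1 < c.length),
      ← cyclePerm_getVert hc (by lia : 0 < c.length), ← Perm.mul_apply, ← sq, h, Perm.one_apply]
  have := hc.getVert_injOn' (by grind) (by grind) getVert_two
  contradiction

variable [Fintype V]

lemma support_cyclePerm_eq_tail (hc : c.IsCycle) :
    (cyclePerm c).support = c.support.tail.toFinset := by
  refine List.support_formPerm_of_nodup _ hc.support_nodup fun u hu => ?_
  have := hc.three_le_length
  have := congrArg List.length hu
  simp only [List.length_tail, SimpleGraph.Walk.length_support, List.length_singleton] at this
  lia

lemma support_cyclePerm (hc : c.IsCycle) : (cyclePerm c).support = c.support.toFinset := by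
  ext u
  rw [support_cyclePerm_eq_tail hc, List.mem_toFinset, List.mem_toFinset,
    SimpleGraph.Walk.mem_support_iff, iff_or_self]
  rintro rfl
  exact SimpleGraph.Walk.end_mem_tail_support hc.not_nil

variable [DecidableRel G.Adj]

lemma cyclePerm_mem_edgePerms (hc : c.IsCycle) : cyclePerm c ∈ edgePerms G := by
  rw [mem_edgePerms]
  intro u hu
  rw [← Perm.mem_support, support_cyclePerm hc, List.mem_toFinset,
    SimpleGraph.Walk.mem_support_iff_exists_getVert] at hu
  obtain ⟨k, rfl, hk⟩ := hu
  rcases hk.lt_or_eq with hk | rfl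
  · rw [cyclePerm_getVert hc hk]
    exact c.adj_getVert_succ hk
  · have hpos : 0 < c.length := by have := hc.three_le_length; lia
    have returns : c.getVert c.length = c.getVert 0 := by simp
    rw [returns, cyclePerm_getVert hc hpos]
    exact c.adj_getVert_succ hpos

theorem cyclePerm_mem_cycleFactorsFinset_or_inv_mem (hc : c.IsCycle)
    (hunique : ∀ ⦃w : V⦄ (d : G.Walk w w), d.IsCycle → d.edges ⊆ c.edges)
    {σ : Perm V} (hG : σ ∈ edgePerms G) (hσ : σ ^ 2 ≠ 1) :
    cyclePerm c ∈ σ.cycleFactorsFinset ∨ (cyclePerm c)⁻¹ ∈ σ.cycleFactorsFinset := by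
  refine mem_cycleFactorsFinset_or_inv_mem (isCycle_cyclePerm hc) (fun u hu => ?_) hσ
  have hmoved : σ u ≠ u := fun e => hu (by rw [e, e])
  have not_bridge : ¬G.IsBridge s(u, σ u) := fun hb => hu (apply_apply_eq_of_isBridge hG hb)
  exact cyclePerm_apply_eq_or_of_mem_edges hc
    (mem_edges_of_not_isBridge hunique (mem_edgePerms.1 hG u hmoved) not_bridge)

theorem charFun_eq_matchPoly_sub_general {R : Type*} [CommRing R] (hc : c.IsCycle)
    (hunique : ∀ ⦃w : V⦄ (d : G.Walk w w), d.IsCycle → d.edges ⊆ c.edges) :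
    (G.adjMatrix R).charpoly =
      matchPoly R G - 2 * matchPoly R (G.induce ↑(c.support.toFinset)ᶜ) := by
  have hforest : (G.induce ↑(c.support.toFinset)ᶜ).IsAcyclic :=
    isAcyclic_induce_of_disjoint_support hunique (by simp)
  rw [← charpoly_adjMatrix_eq_matchPoly_of_isAcyclic hforest, ← support_cyclePerm hc]
  exact charpoly_adjMatrix_eq_sub_of_mem_cycleFactorsFinset (isCycle_cyclePerm hc)
    (cyclePerm_sq_ne_one hc) (cyclePerm_mem_edgePerms hc)
    fun σ => cyclePerm_mem_cycleFactorsFinset_or_inv_mem hc hunique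

end UniqueCycle

lemma charFun_eq_eval_charpoly [Fintype V] [DecidableEq V] (G : SimpleGraph V)
    [DecidableRel G.Adj] (x : ℂ) : charFun G x = (G.adjMatrix ℂ).charpoly.eval x := by
  rw [charFun, Matrix.eval_charpoly, Matrix.scalar_apply, Matrix.smul_one_eq_diagonal]

lemma matchPolyFun_eq_eval_matchPoly [Fintype V] (H : SimpleGraph V) (x : ℂ) :
    matchPolyFun H x = (matchPoly ℂ H).eval x := by
  simp [matchPolyFun, matchPoly, Polynomial.eval_finsetSum]

/-- For a unicyclic graph `G` with unique cycle `C` and `F = G − V(C)`,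
`φ_G(x) = μ_G(x) − 2 μ_F(x)`. -/
theorem charFun_eq_matchPoly_sub [Fintype V] [DecidableEq V] (G : SimpleGraph V)
    [DecidableRel G.Adj]
    (hconn : G.Connected) (hedge : G.edgeFinset.card = Fintype.card V)
    (v : V) (c : G.Walk v v) (hc : c.IsCycle) :
    ∀ x : ℂ, charFun G x =
      matchPolyFun G x - 2 * matchPolyFun (G.induce ↑(c.support.toFinset)ᶜ) x := by
  intro x
  have hunique : ∀ ⦃w : V⦄ (d : G.Walk w w), d.IsCycle → d.edges ⊆ c.edges :=
    fun _ _ hd => edges_subset_edges_of_connected_of_card_eq hconn hedge hc hd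
  simp only [charFun_eq_eval_charpoly, matchPolyFun_eq_eval_matchPoly,
    charFun_eq_matchPoly_sub_general hc hunique, Polynomial.eval_sub, Polynomial.eval_mul,
    Polynomial.eval_ofNat]
end

section
/- Let G be a graph of order n. Then φ_G(x) = ∑_{H ∈ ℰ(G)} (−1)^{c(H)} · 2^{c∘(H)} · x^{n − v(H)}, where ℰ(G) is the set of elementary subgraphs of G (including the empty subgraph), c(H) the number of connected components of H, c∘(H) the number of cycle components, and v(H) the number of vertices of H. -/
/-!
In the Leibniz expansion of `det (x • 1 - A)`, the term of a permutation `σ` vanishes unless `σ`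
moves every vertex that it does not fix along an edge of `G`. The edges used by such a `σ` form an
elementary subgraph `H` whose components are the nontrivial cycles of `σ`: each of its vertices is
joined exactly to its image and its preimage, and these coincide on the 2-cycles. With
`c` nontrivial cycles and `m` moved vertices, the sign is `(-1) ^ (m + c)` and the product of the
entries is `(-1) ^ m * x ^ (n - m)`, so the term depends on `H` alone. Conversely, a permutation
tracing a given elementary `H` amounts to a sense of rotation on each cycle component, and these
can be chosen independently; hence there are `2 ^ numCycComp H` of them.
-/

variable {V : Type*}

/-- Degree of `v` in a subgraph `H`. -/
noncomputable def subDeg {G : SimpleGraph V} (H : G.Subgraph) (v : V) : ℕ :=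
  (H.neighborSet v).ncard

/-- An elementary subgraph: every connected component is a single edge or a cycle.
Equivalently, every vertex has degree `1` or `2` and no vertex of degree `1` is adjacent
to a vertex of degree `2`. -/
def IsElementary {G : SimpleGraph V} (H : G.Subgraph) : Prop :=
  (∀ v ∈ H.verts, subDeg H v = 1 ∨ subDeg H v = 2) ∧
  ∀ v w : V, H.Adj v w → subDeg H v = 1 → subDeg H w ≠ 2

/-- Number of connected components of a subgraph. -/
noncomputable def numComp {G : SimpleGraph V} (H : G.Subgraph) : ℕ :=
  Nat.card H.coe.ConnectedComponent

/-- Number of cycle components (components in which every vertex has degree `2`). -/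
noncomputable def numCycComp {G : SimpleGraph V} (H : G.Subgraph) : ℕ :=
  Nat.card {K : H.coe.ConnectedComponent |
    ∀ v : H.verts, H.coe.connectedComponentMk v = K → subDeg H ↑v = 2}

open Equiv

theorem eq_of_reachable_of_forall_adj {W α : Type*} {F : SimpleGraph W} {f : W → α}
    (hf : ∀ v w, F.Adj v w → f v = f w) {v w : W} (h : F.Reachable v w) : f v = f w := by
  obtain ⟨p⟩ := h
  induction p with
  | nil => rfl
  | cons hadj _ ih => exact (hf _ _ hadj).trans ih

/-- `σ` moves every vertex that it does not fix along an edge of `F`. -/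
def MovesAlong (F : SimpleGraph V) (σ : Perm V) : Prop :=
  ∀ ⦃v⦄, σ v ≠ v → F.Adj v (σ v)

namespace MovesAlong

variable {F F' : SimpleGraph V} {σ : Perm V} {v w : V}

theorem mono (hF : F ≤ F') (hσ : MovesAlong F σ) : MovesAlong F' σ :=
  fun _ hv => hF (hσ hv)

theorem reachable_apply (hσ : MovesAlong F σ) (v : V) : F.Reachable v (σ v) := by
  by_cases hv : σ v = v
  · rw [hv]
  · exact (hσ hv).reachable

theorem reachable_of_sameCycle (hσ : MovesAlong F σ) (h : σ.SameCycle v w) :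
    F.Reachable v w := by
  obtain ⟨n, rfl⟩ := h
  induction n using Int.induction_on with
  | zero => exact SimpleGraph.Reachable.refl _
  | succ n ih =>
    rw [add_comm, zpow_one_add, Perm.mul_apply]
    exact ih.trans (hσ.reachable_apply _)
  | pred n ih =>
    refine ih.trans (SimpleGraph.Reachable.symm ?_)
    have hstep := hσ.reachable_apply ((σ ^ (-(n : ℤ) - 1)) v)
    rwa [← Perm.mul_apply, ← zpow_one_add, add_sub_cancel] at hstep

end MovesAlong

/-- `σ` runs once around every component of `H`: it moves exactly the vertices of `H`, and the edges
of `H` are the pairs `v`, `σ v`. Its 2-cycles are the single-edge components of `H`, and its longer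
cycles are the cycle components of `H` together with a sense of rotation. -/
structure IsOrientation {G : SimpleGraph V} (σ : Perm V) (H : G.Subgraph) : Prop where
  mem_verts_iff : ∀ v, v ∈ H.verts ↔ σ v ≠ v
  adj_iff : ∀ v w, H.Adj v w ↔ v ≠ w ∧ (σ v = w ∨ σ w = v)

namespace IsOrientation

variable {G : SimpleGraph V} {H : G.Subgraph} {σ σ' : Perm V} {v w : V}

theorem adj_apply (h : IsOrientation σ H) (hv : v ∈ H.verts) : H.Adj v (σ v) :=
  (h.adj_iff _ _).2 ⟨((h.mem_verts_iff v).1 hv).symm, Or.inl rfl⟩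

theorem apply_eq_self (h : IsOrientation σ H) (hv : v ∉ H.verts) : σ v = v :=
  not_not.1 (mt (h.mem_verts_iff v).2 hv)

theorem apply_mem_verts_iff (h : IsOrientation σ H) : σ v ∈ H.verts ↔ v ∈ H.verts := by
  rw [h.mem_verts_iff, h.mem_verts_iff, σ.injective.ne_iff]

protected theorem symm (h : IsOrientation σ H) : IsOrientation σ.symm H where
  mem_verts_iff v := by rw [h.mem_verts_iff, Ne, Ne, Equiv.symm_apply_eq, eq_comm]
  adj_iff v w := by
    rw [h.adj_iff, Equiv.symm_apply_eq, Equiv.symm_apply_eq, or_comm, eq_comm (a := w),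
      eq_comm (a := v)]

theorem neighborSet_eq (h : IsOrientation σ H) (hv : v ∈ H.verts) :
    H.neighborSet v = {σ v, σ.symm v} := by
  have hmoved := (h.mem_verts_iff v).1 hv
  ext w
  rw [SimpleGraph.Subgraph.mem_neighborSet, h.adj_iff, Set.mem_insert_iff, Set.mem_singleton_iff,
    Equiv.eq_symm_apply, eq_comm (a := w)]
  refine and_iff_right_of_imp ?_
  rintro hw rfl
  exact hmoved (hw.elim id id)

theorem subDeg_eq_one_iff (h : IsOrientation σ H) (hv : v ∈ H.verts) :
    subDeg H v = 1 ↔ σ v = σ.symm v := by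
  rw [subDeg, h.neighborSet_eq hv]
  constructor
  · contrapose!
    intro hne
    rw [Set.ncard_pair hne]
    decide
  · intro heq
    rw [heq, Set.pair_eq_singleton, Set.ncard_singleton]

theorem subDeg_eq_two_iff (h : IsOrientation σ H) (hv : v ∈ H.verts) :
    subDeg H v = 2 ↔ σ v ≠ σ.symm v := by
  refine ⟨fun hdeg heq => ?_, fun hne => ?_⟩
  · simp [(h.subDeg_eq_one_iff hv).2 heq] at hdeg
  · rw [subDeg, h.neighborSet_eq hv, Set.ncard_pair hne]

theorem isElementary (h : IsOrientation σ H) : IsElementary H := by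
  constructor
  · intro v hv
    rw [h.subDeg_eq_one_iff hv, h.subDeg_eq_two_iff hv]
    exact em _
  · intro v w hvw hdeg
    rw [Ne, h.subDeg_eq_two_iff hvw.snd_mem, not_not, Equiv.eq_symm_apply]
    rw [h.subDeg_eq_one_iff hvw.fst_mem, Equiv.eq_symm_apply] at hdeg
    rcases ((h.adj_iff v w).1 hvw).2 with rfl | rfl
    · rw [hdeg]
    · exact σ.injective hdeg

end IsOrientation

section CycleSubgraph

variable {G : SimpleGraph V} {σ : Perm V} {H : G.Subgraph}

/-- The subgraph of `G` traced by `σ`: the vertices moved by `σ`, joined by those pairs `v`, `σ v`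
which are edges of `G`. -/
def cycleSubgraph (G : SimpleGraph V) (σ : Perm V) : G.Subgraph where
  verts := {v | σ v ≠ v}
  Adj v w := G.Adj v w ∧ (σ v = w ∨ σ w = v)
  adj_sub h := h.1
  edge_vert := by
    rintro v w ⟨hadj, rfl | rfl⟩
    · exact hadj.ne'
    · exact σ.injective.ne hadj.ne
  symm := ⟨fun _ _ h => ⟨h.1.symm, h.2.symm⟩⟩

theorem isOrientation_cycleSubgraph (hσ : MovesAlong G σ) :
    IsOrientation σ (cycleSubgraph G σ) where
  mem_verts_iff _ := Iff.rfl
  adj_iff v w := by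
    refine and_congr_left fun hvw => ⟨SimpleGraph.Adj.ne, fun hne => ?_⟩
    rcases hvw with rfl | rfl
    · exact hσ hne.symm
    · exact (hσ hne).symm

theorem isOrientation_iff :
    IsOrientation σ H ↔ MovesAlong G σ ∧ cycleSubgraph G σ = H := by
  constructor
  · intro h
    have hσ : MovesAlong G σ := fun v hv => (h.adj_apply ((h.mem_verts_iff v).2 hv)).adj_sub
    have hG := isOrientation_cycleSubgraph hσ
    refine ⟨hσ, SimpleGraph.Subgraph.ext (Set.ext fun v => ?_) (funext₂ fun v w => propext ?_)⟩
    · rw [h.mem_verts_iff, hG.mem_verts_iff]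
    · rw [h.adj_iff, hG.adj_iff]
  · rintro ⟨hσ, rfl⟩
    exact isOrientation_cycleSubgraph hσ

end CycleSubgraph

theorem exists_movesAlong_of_subsingleton_neighborSet {F : SimpleGraph V}
    (hF : ∀ v, (F.neighborSet v).Subsingleton) :
    ∃ σ, MovesAlong F σ ∧ ∀ v, (F.neighborSet v).Nonempty → σ v ≠ v := by
  classical
  let mate (v : V) : V := if h : (F.neighborSet v).Nonempty then h.some else v
  have adj_mate {v : V} (h : (F.neighborSet v).Nonempty) : F.Adj v (mate v) := by
    simp only [mate, dif_pos h]
    exact h.some_mem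
  have mate_mate : Function.Involutive mate := fun v => by
    by_cases h : (F.neighborSet v).Nonempty
    · have hadj := (adj_mate h).symm
      exact hF _ (adj_mate ⟨v, hadj⟩) hadj
    · have hfix : mate v = v := dif_neg h
      rw [hfix, hfix]
  refine ⟨mate_mate.toPerm, fun v hv => ?_, fun v h => (adj_mate h).ne'⟩
  by_contra hadj
  exact hv (dif_neg fun h => hadj (adj_mate h))

theorem exists_movesAlong_of_isCycle {F : SimpleGraph V} {u : V} {p : F.Walk u u}
    (hp : p.IsCycle) :
    ∃ σ, MovesAlong F σ ∧ ∀ v ∈ p.support, σ (σ v) ≠ v := by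
  classical
  -- The support lists the base point of `p` at both ends.
  set l := p.support.dropLast with hl
  have hlen : l.length = p.length := by simp [hl]
  have hnodup : l.Nodup := hp.nodup_dropLast_support
  have hget (i : ℕ) (hi : i < l.length) : l[i] = p.getVert i := by
    simp [hl, SimpleGraph.Walk.support_getElem_eq_getVert]
  have hthree := hp.three_le_length
  refine ⟨l.formPerm, fun v hv => ?_, fun v hv => ?_⟩
  · obtain ⟨i, hi, rfl⟩ := List.getElem_of_mem (List.mem_of_formPerm_apply_ne hv)
    have hnext : l.formPerm l[i] = p.getVert (i + 1) := by
      rw [List.formPerm_apply_getElem _ hnodup, hget]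
      rcases (Nat.succ_le_of_lt hi).eq_or_lt with h | h
      · have hi' : i + 1 = p.length := h.trans hlen
        rw [hlen, hi', Nat.mod_self, SimpleGraph.Walk.getVert_zero, SimpleGraph.Walk.getVert_length]
      · rw [Nat.mod_eq_of_lt h]
    rw [hnext, hget]
    exact p.adj_getVert_succ (hlen ▸ hi)
  · have hvl : v ∈ l := by
      obtain ⟨n, rfl, hn⟩ := SimpleGraph.Walk.mem_support_iff_exists_getVert.1 hv
      rcases hn.eq_or_lt with rfl | hn
      · rw [SimpleGraph.Walk.getVert_length, ← p.getVert_zero, ← hget 0 (by omega)]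
        exact List.getElem_mem _
      · rw [← hget n (by omega)]
        exact List.getElem_mem _
    obtain ⟨i, hi, rfl⟩ := List.getElem_of_mem hvl
    rw [← Perm.mul_apply, ← sq, List.formPerm_pow_apply_getElem _ hnodup, Ne,
      hnodup.getElem_inj_iff]
    rcases lt_or_ge (i + 2) l.length with h | h
    · rw [Nat.mod_eq_of_lt h]
      omega
    · rw [Nat.mod_eq_sub_mod h, Nat.mod_eq_of_lt (by omega)]
      omega

/-- Permutations moving along `F` preserve its components, so one of them may be chosen in every
component. -/
theorem exists_movesAlong_of_connectedComponent {F : SimpleGraph V}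
    {g : F.ConnectedComponent → Perm V} (hg : ∀ K, MovesAlong F (g K)) :
    ∃ σ, MovesAlong F σ ∧ ∀ K, ∀ v ∈ K.supp, σ v = g K v ∧ σ (σ v) = g K (g K v) := by
  have mk_apply (K) (v : V) : F.connectedComponentMk (g K v) = F.connectedComponentMk v :=
    (SimpleGraph.ConnectedComponent.sound ((hg K).reachable_apply v)).symm
  have mk_symm_apply (K) (v : V) :
      F.connectedComponentMk ((g K).symm v) = F.connectedComponentMk v := by
    rw [← mk_apply K, Equiv.apply_symm_apply]
  refine ⟨⟨fun v => g (F.connectedComponentMk v) v, fun v => (g (F.connectedComponentMk v)).symm v,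
    fun v => by simp [mk_apply], fun v => by simp [mk_symm_apply]⟩, fun v hv => hg _ hv, ?_⟩
  rintro _ v rfl
  simp [mk_apply]

theorem exists_movesAlong_of_isCycles [Finite V] {F : SimpleGraph V} (hF : F.IsCycles) :
    ∃ σ, MovesAlong F σ ∧ ∀ v, (F.neighborSet v).Nonempty → σ (σ v) ≠ v := by
  have hcomp (K : F.ConnectedComponent) :
      ∃ σ, MovesAlong F σ ∧ ∀ v ∈ K.supp, (F.neighborSet v).Nonempty → σ (σ v) ≠ v := by
    by_cases hK : ∃ v ∈ K.supp, (F.neighborSet v).Nonempty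
    · obtain ⟨v, hv, hne⟩ := hK
      obtain ⟨p, hp, hsupp⟩ := hF.exists_cycle_toSubgraph_verts_eq_connectedComponentSupp hv hne
      obtain ⟨σ, hσ, hσ'⟩ := exists_movesAlong_of_isCycle hp
      refine ⟨σ, hσ, fun w hw _ => hσ' w ?_⟩
      rwa [← SimpleGraph.Walk.mem_verts_toSubgraph, hsupp]
    · exact ⟨1, fun v hv => (hv rfl).elim, fun v hv hne => (hK ⟨v, hv, hne⟩).elim⟩
  choose g hg hg' using hcomp
  obtain ⟨σ, hσ, hσg⟩ := exists_movesAlong_of_connectedComponent hg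
  exact ⟨σ, hσ, fun v hne => (hσg _ v rfl).2 ▸ hg' _ v rfl hne⟩

/-- The edges of `H` between vertices of degree `k`, as a graph on all of `V`. When `H` is
elementary, these are the edges of its single-edge components for `k = 1` and of its cycle
components for `k = 2`. -/
def degreePart {G : SimpleGraph V} (H : G.Subgraph) (k : ℕ) : SimpleGraph V where
  Adj v w := H.Adj v w ∧ subDeg H v = k ∧ subDeg H w = k
  symm := ⟨fun _ _ h => ⟨h.1.symm, h.2.2, h.2.1⟩⟩
  loopless := ⟨fun _ h => h.1.ne rfl⟩

theorem degreePart_le_spanningCoe {G : SimpleGraph V} (H : G.Subgraph) (k : ℕ) :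
    degreePart H k ≤ H.spanningCoe :=
  fun _ _ h => h.1

namespace IsElementary

variable {G : SimpleGraph V} {H : G.Subgraph} {σ : Perm V} {v w : V}

theorem subDeg_eq_of_adj (he : IsElementary H) (h : H.Adj v w) : subDeg H v = subDeg H w := by
  have hv := he.1 v h.fst_mem
  have hw := he.1 w h.snd_mem
  have hvw := he.2 v w h
  have hwv := he.2 w v h.symm
  omega

theorem neighborSet_degreePart_subDeg (he : IsElementary H) (v : V) :
    (degreePart H (subDeg H v)).neighborSet v = H.neighborSet v := by
  ext w
  exact ⟨fun h => h.1, fun h => ⟨h, rfl, (he.subDeg_eq_of_adj h).symm⟩⟩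

theorem ncard_neighborSet_degreePart (he : IsElementary H) {k : ℕ}
    (h : ((degreePart H k).neighborSet v).Nonempty) :
    ((degreePart H k).neighborSet v).ncard = k := by
  obtain ⟨_, _, rfl, _⟩ := h
  rw [he.neighborSet_degreePart_subDeg, subDeg]

theorem nonempty_neighborSet_degreePart (he : IsElementary H) {k : ℕ} (hk : k ≠ 0)
    (hv : subDeg H v = k) : ((degreePart H k).neighborSet v).Nonempty := by
  subst hv
  rw [he.neighborSet_degreePart_subDeg]
  exact Set.nonempty_of_ncard_ne_zero hk

theorem exists_movesAlong [Finite V] (he : IsElementary H) :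
    ∃ σ, MovesAlong H.spanningCoe σ ∧ (∀ v ∈ H.verts, σ v ≠ v) ∧
      ∀ v, subDeg H v = 2 → σ (σ v) ≠ v := by
  obtain ⟨τ, hτ, hτne⟩ := exists_movesAlong_of_subsingleton_neighborSet (F := degreePart H 1)
    fun v => by
      rcases Set.eq_empty_or_nonempty ((degreePart H 1).neighborSet v) with h | h
      · simp [h]
      · exact Set.ncard_le_one_iff_subsingleton.1 (he.ncard_neighborSet_degreePart h).le
  obtain ⟨ρ, hρ, hρne⟩ := exists_movesAlong_of_isCycles (F := degreePart H 2)
    fun v => he.ncard_neighborSet_degreePart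
  have hcomp (K : H.spanningCoe.ConnectedComponent) :
      ∃ σ, MovesAlong H.spanningCoe σ ∧
        ∀ v ∈ K.supp, (v ∈ H.verts → σ v ≠ v) ∧ (subDeg H v = 2 → σ (σ v) ≠ v) := by
    induction K using SimpleGraph.ConnectedComponent.ind with | _ u
    have subDeg_eq : ∀ v ∈ (H.spanningCoe.connectedComponentMk u).supp, subDeg H v = subDeg H u :=
      fun v hv => eq_of_reachable_of_forall_adj (fun _ _ => he.subDeg_eq_of_adj)
        (SimpleGraph.ConnectedComponent.exact hv)
    by_cases hu : subDeg H u = 2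
    · refine ⟨ρ, hρ.mono (degreePart_le_spanningCoe H 2), fun v hv => ?_⟩
      have hne := hρne v (he.nonempty_neighborSet_degreePart two_ne_zero
        ((subDeg_eq v hv).trans hu))
      exact ⟨fun _ hfix => hne (by rw [hfix, hfix]), fun _ => hne⟩
    · refine ⟨τ, hτ.mono (degreePart_le_spanningCoe H 1), fun v hv => ?_⟩
      have hdeg : subDeg H v ≠ 2 := subDeg_eq v hv ▸ hu
      exact ⟨fun hvH => hτne v (he.nonempty_neighborSet_degreePart one_ne_zero
        ((he.1 v hvH).resolve_right hdeg)), fun h => (hdeg h).elim⟩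
  choose g hg hgne using hcomp
  obtain ⟨σ, hσ, hσg⟩ := exists_movesAlong_of_connectedComponent hg
  refine ⟨σ, hσ, fun v hv => ?_, fun v hv => ?_⟩
  · exact (hσg _ v rfl).1 ▸ (hgne _ v rfl).1 hv
  · exact (hσg _ v rfl).2 ▸ (hgne _ v rfl).2 hv

theorem neighborSet_eq_of_movesAlong (he : IsElementary H) (hσ : MovesAlong H.spanningCoe σ)
    (hmoved : σ v ≠ v) (htwo : subDeg H v = 2 → σ (σ v) ≠ v) :
    H.neighborSet v = {σ v, σ.symm v} := by
  have hdeg := he.1 v (hσ hmoved).fst_mem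
  have hsub : {σ v, σ.symm v} ⊆ H.neighborSet v := by
    have hpre : σ (σ.symm v) ≠ σ.symm v := by
      rwa [Equiv.apply_symm_apply, Ne, Equiv.eq_symm_apply]
    have hadj := (hσ hpre).symm
    rw [Equiv.apply_symm_apply] at hadj
    exact Set.pair_subset (hσ hmoved) hadj
  have hcard : subDeg H v ≤ ({σ v, σ.symm v} : Set V).ncard := by
    rcases hdeg with h | h
    · rw [h, Nat.one_le_iff_ne_zero]
      exact Set.ncard_ne_zero_of_mem (Set.mem_insert _ _)
    · have hne : σ v ≠ σ.symm v := by
        rw [Ne, Equiv.eq_symm_apply]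
        exact htwo h
      rw [h, Set.ncard_pair hne]
  have hfin : (H.neighborSet v).Finite := by
    refine Set.finite_of_ncard_ne_zero (?_ : subDeg H v ≠ 0)
    omega
  exact (Set.eq_of_subset_of_ncard_le hsub hcard hfin).symm

theorem isOrientation_of_movesAlong (he : IsElementary H) (hσ : MovesAlong H.spanningCoe σ)
    (hmoved : ∀ v ∈ H.verts, σ v ≠ v) (htwo : ∀ v, subDeg H v = 2 → σ (σ v) ≠ v) :
    IsOrientation σ H where
  mem_verts_iff v := ⟨hmoved v, fun hv => (hσ hv).fst_mem⟩
  adj_iff v w := by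
    constructor
    · intro hadj
      have hw : w ∈ H.neighborSet v := hadj
      rw [he.neighborSet_eq_of_movesAlong hσ (hmoved v hadj.fst_mem) (htwo v)] at hw
      exact ⟨hadj.ne, hw.imp Eq.symm fun h => by rw [h, Equiv.apply_symm_apply]⟩
    · rintro ⟨hne, rfl | rfl⟩
      · exact hσ hne.symm
      · exact (hσ hne).symm

theorem exists_isOrientation [Finite V] (he : IsElementary H) :
    ∃ σ : Perm V, IsOrientation σ H := by
  obtain ⟨σ, hσ, hmoved, htwo⟩ := he.exists_movesAlong
  exact ⟨σ, he.isOrientation_of_movesAlong hσ hmoved htwo⟩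

end IsElementary

namespace IsOrientation

variable {G : SimpleGraph V} {H : G.Subgraph} {σ σ' : Perm V} {v w : V}

theorem sameCycle_of_adj (h : IsOrientation σ H) (hvw : H.Adj v w) : σ.SameCycle v w := by
  rcases ((h.adj_iff v w).1 hvw).2 with rfl | rfl
  · exact Perm.sameCycle_apply_right.2 (Perm.SameCycle.refl _ _)
  · exact Perm.sameCycle_apply_left.2 (Perm.SameCycle.refl _ _)

theorem reachable_of_sameCycle (h : IsOrientation σ H) {v w : H.verts}
    (hvw : σ.SameCycle (v : V) w) : H.coe.Reachable v w :=
  MovesAlong.reachable_of_sameCycle (σ := σ.subtypePerm fun _ => h.apply_mem_verts_iff)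
    (fun v _ => h.adj_apply v.2) (Perm.sameCycle_subtypePerm.2 hvw)

theorem ncard_verts [Fintype V] [DecidableEq V] (h : IsOrientation σ H) :
    H.verts.ncard = σ.support.card := by
  rw [← Set.ncard_coe_finset]
  congr 1
  ext v
  simp [h.mem_verts_iff v]

theorem numComp_eq [Fintype V] [DecidableEq V] (h : IsOrientation σ H) :
    numComp H = σ.cycleType.card := by
  have mem_support (v : H.verts) : (v : V) ∈ σ.support :=
    Perm.mem_support.2 ((h.mem_verts_iff v).1 v.2)
  let cycle (v : H.verts) : σ.cycleFactorsFinset :=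
    ⟨σ.cycleOf v, Perm.cycleOf_mem_cycleFactorsFinset_iff.2 (mem_support v)⟩
  let toCycle : H.coe.ConnectedComponent → σ.cycleFactorsFinset := Quot.lift cycle
    fun _ _ => eq_of_reachable_of_forall_adj fun _ _ hadj =>
      Subtype.ext (h.sameCycle_of_adj hadj).cycleOf_eq
  have hbij : Function.Bijective toCycle := by
    constructor
    · refine SimpleGraph.ConnectedComponent.ind₂ fun v w heq => ?_
      exact SimpleGraph.ConnectedComponent.sound (h.reachable_of_sameCycle
        ((Perm.sameCycle_iff_cycleOf_eq_of_mem_support (mem_support v) (mem_support w)).2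
          (congrArg Subtype.val heq)))
    · rintro ⟨c, hc⟩
      obtain ⟨v, hv⟩ := (Perm.mem_cycleFactorsFinset_iff.1 hc).1.nonempty_support
      have hvH : v ∈ H.verts := (h.mem_verts_iff v).2
        (Perm.mem_support.1 (Perm.mem_cycleFactorsFinset_support_le hc hv))
      exact ⟨H.coe.connectedComponentMk ⟨v, hvH⟩, Subtype.ext (Perm.cycle_is_cycleOf hv hc).symm⟩
  rw [numComp, Nat.card_eq_of_bijective toCycle hbij, Perm.cycleType_def]
  simp

theorem symm_apply_eq_of_apply_eq (h : IsOrientation σ H) (h' : IsOrientation σ' H)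
    (hv : v ∈ H.verts) (heq : σ v = σ' v) : σ.symm v = σ'.symm v := by
  have hpair := (h.neighborSet_eq hv).symm.trans (h'.neighborSet_eq hv)
  rw [heq] at hpair
  grind [Set.pair_eq_pair_iff]

theorem apply_eq_of_adj (h : IsOrientation σ H) (h' : IsOrientation σ' H) (hvw : H.Adj v w)
    (heq : σ v = σ' v) : σ w = σ' w := by
  have symm_eq := h.symm_apply_eq_of_apply_eq h' hvw.fst_mem heq
  rcases ((h'.adj_iff v w).1 hvw).2 with hw | hw
  · subst hw
    refine h.symm.symm_apply_eq_of_apply_eq h'.symm hvw.snd_mem ?_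
    rw [← heq, Equiv.symm_apply_apply, heq, Equiv.symm_apply_apply]
  · subst hw
    rw [Equiv.symm_apply_apply, Equiv.symm_apply_eq] at symm_eq
    exact symm_eq.symm

theorem apply_eq_iff_of_reachable (h : IsOrientation σ H) (h' : IsOrientation σ' H)
    {v w : H.verts} (hvw : H.coe.Reachable v w) : σ v = σ' v ↔ σ w = σ' w :=
  iff_of_eq <| eq_of_reachable_of_forall_adj (f := fun u : H.verts => σ u = σ' u)
    (fun _ _ hadj => propext ⟨h.apply_eq_of_adj h' hadj, h.apply_eq_of_adj h' hadj.symm⟩) hvw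

theorem apply_eq_or_apply_eq_symm_apply (h : IsOrientation σ H) (h' : IsOrientation σ' H)
    (hv : v ∈ H.verts) : σ' v = σ v ∨ σ' v = σ.symm v := by
  have hmem : σ' v ∈ H.neighborSet v := h'.adj_apply hv
  rwa [h.neighborSet_eq hv] at hmem

theorem exists_isOrientation_eq_on_symm_off (h : IsOrientation σ H) {S : Set V}
    (hS : ∀ v w, H.Adj v w → (v ∈ S ↔ w ∈ S)) :
    ∃ σ', IsOrientation σ' H ∧ (∀ v ∈ S, σ' v = σ v) ∧ ∀ v ∉ S, σ' v = σ.symm v := by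
  classical
  have apply_mem (v : V) : σ v ∈ S ↔ v ∈ S := by
    by_cases hv : v ∈ H.verts
    · exact (hS _ _ (h.adj_apply hv)).symm
    · rw [h.apply_eq_self hv]
  have symm_mem (v : V) : σ.symm v ∈ S ↔ v ∈ S := by
    rw [← apply_mem, Equiv.apply_symm_apply]
  let σ' : Perm V := Perm.subtypeCongr (σ.subtypePerm apply_mem)
    (Perm.subtypePerm σ.symm fun v => not_congr (symm_mem v))
  have on_S (v : V) (hv : v ∈ S) : σ' v = σ v := by
    rw [Perm.subtypeCongr.left_apply _ _ hv, Perm.subtypePerm_apply]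
  have off_S (v : V) (hv : v ∉ S) : σ' v = σ.symm v := by
    rw [Perm.subtypeCongr.right_apply _ _ hv, Perm.subtypePerm_apply]
  refine ⟨σ', ⟨fun v => ?_, fun v w => ?_⟩, on_S, off_S⟩
  · by_cases hv : v ∈ S
    · rw [on_S v hv, h.mem_verts_iff]
    · rw [off_S v hv, h.symm.mem_verts_iff]
  · by_cases hv : v ∈ S <;> by_cases hw : w ∈ S
    · rw [on_S v hv, on_S w hw, h.adj_iff]
    · rw [on_S v hv, off_S w hw, h.adj_iff, Equiv.symm_apply_eq, eq_comm (a := w), or_self]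
      exact and_congr_right' <| or_iff_left_of_imp fun h => (hw ((apply_mem w).1 (h ▸ hv))).elim
    · rw [off_S v hv, on_S w hw, h.adj_iff, Equiv.symm_apply_eq, eq_comm (a := v), or_self]
      exact and_congr_right' <| or_iff_right_of_imp fun h => (hv ((apply_mem v).1 (h ▸ hw))).elim
    · rw [off_S v hv, off_S w hw, h.symm.adj_iff]

end IsOrientation

section Counting

variable {G : SimpleGraph V} {H : G.Subgraph} {σ₀ σ σ' : Perm V}

/-- The set of cycle components of an elementary subgraph, whose cardinality is `numCycComp H`. -/
def cycComps (H : G.Subgraph) : Set H.coe.ConnectedComponent :=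
  {K | ∀ v : H.verts, H.coe.connectedComponentMk v = K → subDeg H v = 2}

/-- The set of cycle components of `H` which `σ` traverses in the same sense as `σ₀`. It determines
`σ` among the orientations of `H`, once the orientation `σ₀` is fixed. -/
def agreeSet (H : G.Subgraph) (σ₀ σ : Perm V) : Set (cycComps H) :=
  {K | ∃ v : H.verts, H.coe.connectedComponentMk v = K ∧ σ v = σ₀ v}

theorem IsElementary.connectedComponentMk_mem_cycComps_iff (he : IsElementary H) {v : H.verts} :
    H.coe.connectedComponentMk v ∈ cycComps H ↔ subDeg H v = 2 := by
  refine ⟨fun hv => hv v rfl, fun hv w hw => ?_⟩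
  rw [← hv]
  exact eq_of_reachable_of_forall_adj (f := fun u : H.verts => subDeg H u)
    (fun _ _ => he.subDeg_eq_of_adj) (SimpleGraph.ConnectedComponent.exact hw)

namespace IsOrientation

theorem mem_agreeSet_iff (h₀ : IsOrientation σ₀ H) (h : IsOrientation σ H) {v : H.verts}
    (hv : H.coe.connectedComponentMk v ∈ cycComps H) :
    ⟨_, hv⟩ ∈ agreeSet H σ₀ σ ↔ σ v = σ₀ v := by
  refine ⟨?_, fun heq => ⟨v, rfl, heq⟩⟩
  rintro ⟨w, hw, heq⟩
  exact (h.apply_eq_iff_of_reachable h₀ (SimpleGraph.ConnectedComponent.exact hw)).1 heq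

theorem eq_of_agreeSet_eq (h₀ : IsOrientation σ₀ H) (h : IsOrientation σ H)
    (h' : IsOrientation σ' H) (heq : agreeSet H σ₀ σ = agreeSet H σ₀ σ') : σ = σ' := by
  ext v
  by_cases hv : v ∈ H.verts
  · have hσ := h₀.apply_eq_or_apply_eq_symm_apply h hv
    have hσ' := h₀.apply_eq_or_apply_eq_symm_apply h' hv
    rcases h.isElementary.1 v hv with hdeg | hdeg
    · rw [h₀.subDeg_eq_one_iff hv] at hdeg
      rw [← hdeg, or_self] at hσ hσ'
      rw [hσ, hσ']
    · have hK := h.isElementary.connectedComponentMk_mem_cycComps_iff (v := ⟨v, hv⟩).2 hdeg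
      have agree_iff : σ v = σ₀ v ↔ σ' v = σ₀ v := by
        rw [← h₀.mem_agreeSet_iff h hK, heq, h₀.mem_agreeSet_iff h' hK]
      grind
  · rw [h.apply_eq_self hv, h'.apply_eq_self hv]

theorem exists_agreeSet_eq (h₀ : IsOrientation σ₀ H) (A : Set (cycComps H)) :
    ∃ σ, IsOrientation σ H ∧ agreeSet H σ₀ σ = A := by
  let S : Set V := {v | ∃ K ∈ A, ∃ hv : v ∈ H.verts, H.coe.connectedComponentMk ⟨v, hv⟩ = K}
  have hS {v w : V} (hvw : H.Adj v w) (hv : v ∈ S) : w ∈ S := by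
    obtain ⟨K, hK, hv, hmk⟩ := hv
    have hadj : H.coe.Adj ⟨w, hvw.snd_mem⟩ ⟨v, hv⟩ := hvw.symm
    exact ⟨K, hK, hvw.snd_mem,
      (SimpleGraph.ConnectedComponent.connectedComponentMk_eq_of_adj hadj).trans hmk⟩
  obtain ⟨σ, h, on_S, off_S⟩ := h₀.exists_isOrientation_eq_on_symm_off
    fun v w hvw => ⟨hS hvw, hS hvw.symm⟩
  refine ⟨σ, h, Set.ext ?_⟩
  rintro ⟨K, hK⟩
  induction K using SimpleGraph.ConnectedComponent.ind with | _ v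
  have mem_S_iff : (v : V) ∈ S ↔ ⟨_, hK⟩ ∈ A := by
    refine ⟨?_, fun hA => ⟨_, hA, v.2, rfl⟩⟩
    rintro ⟨L, hL, _, hv⟩
    obtain rfl : L = ⟨_, hK⟩ := Subtype.ext hv.symm
    exact hL
  rw [h₀.mem_agreeSet_iff h hK, ← mem_S_iff]
  refine ⟨fun heq => ?_, on_S v⟩
  by_contra hv
  rw [off_S v hv] at heq
  exact (h₀.subDeg_eq_two_iff v.2).1 (hK v rfl) heq.symm

end IsOrientation

theorem IsElementary.card_isOrientation [Finite V] (he : IsElementary H) :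
    Nat.card {σ : Perm V // IsOrientation σ H} = 2 ^ numCycComp H := by
  obtain ⟨σ₀, h₀⟩ := he.exists_isOrientation
  have hbij : Function.Bijective
      fun σ : {σ : Perm V // IsOrientation σ H} => agreeSet H σ₀ σ := by
    refine ⟨fun σ σ' heq => Subtype.ext (h₀.eq_of_agreeSet_eq σ.2 σ'.2 heq), fun A => ?_⟩
    obtain ⟨σ, h, heq⟩ := h₀.exists_agreeSet_eq A
    exact ⟨⟨σ, h⟩, heq⟩
  rw [Nat.card_eq_of_bijective _ hbij, Set, Nat.card_fun, Nat.card_eq_fintype_card,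
    Fintype.card_prop]
  rfl

open scoped Classical in
theorem IsElementary.sum_isOrientation {R : Type*} [CommRing R] [Fintype V] [DecidableEq V]
    (he : IsElementary H) (x : R) :
    ∑ σ : Perm V with IsOrientation σ H,
        (-1) ^ σ.cycleType.card * x ^ (Fintype.card V - σ.support.card) =
      (-1) ^ numComp H * 2 ^ numCycComp H * x ^ (Fintype.card V - H.verts.ncard) := by
  have hcard : ({σ : Perm V | IsOrientation σ H} : Finset _).card = 2 ^ numCycComp H := by
    rw [← he.card_isOrientation, Nat.card_eq_fintype_card, Fintype.card_subtype]
  have term_eq (σ : Perm V) (hσ : σ ∈ ({σ | IsOrientation σ H} : Finset _)) :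
      (-1 : R) ^ σ.cycleType.card * x ^ (Fintype.card V - σ.support.card) =
        (-1) ^ numComp H * x ^ (Fintype.card V - H.verts.ncard) := by
    have h := (Finset.mem_filter_univ σ).1 hσ
    rw [h.numComp_eq, h.ncard_verts]
  rw [Finset.sum_congr rfl term_eq, Finset.sum_const, hcard, nsmul_eq_mul]
  push_cast
  ring

end Counting

section Leibniz

variable {R : Type*} [CommRing R] [Fintype V] [DecidableEq V] {G : SimpleGraph V}
  [DecidableRel G.Adj] {σ : Perm V}

theorem prod_smul_one_sub_adjMatrix_of_movesAlong (x : R) (hσ : MovesAlong G σ) :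
    ∏ v, (x • (1 : Matrix V V R) - G.adjMatrix R) (σ v) v =
      (-1) ^ σ.support.card * x ^ (Fintype.card V - σ.support.card) := by
  have entry_eq (v : V) : (x • (1 : Matrix V V R) - G.adjMatrix R) (σ v) v =
      if v ∈ σ.support then -1 else x := by
    by_cases hv : σ v = v
    · simp [hv]
    · simp [hv, (hσ hv).symm]
  have compl : ({v | v ∉ σ.support} : Finset V) = σ.supportᶜ := by ext; simp
  rw [Finset.prod_congr rfl fun v _ => entry_eq v, Finset.prod_ite, Finset.prod_const,
    Finset.prod_const, Finset.filter_univ_mem, compl, Finset.card_compl]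

theorem prod_smul_one_sub_adjMatrix_of_not_movesAlong (x : R) (hσ : ¬MovesAlong G σ) :
    ∏ v, (x • (1 : Matrix V V R) - G.adjMatrix R) (σ v) v = 0 := by
  simp only [MovesAlong, not_forall] at hσ
  obtain ⟨v, hv, hadj⟩ := hσ
  exact Finset.prod_eq_zero (Finset.mem_univ v) (by simp [hv, G.adj_comm, hadj])

variable (G)

open scoped Classical in
theorem det_smul_one_sub_adjMatrix (x : R) :
    (x • (1 : Matrix V V R) - G.adjMatrix R).det =
      ∑ σ : Perm V with MovesAlong G σ,
        (-1) ^ σ.cycleType.card * x ^ (Fintype.card V - σ.support.card) := by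
  rw [Matrix.det_apply', Finset.sum_filter]
  refine Finset.sum_congr rfl fun σ _ => ?_
  split_ifs with hσ
  · rw [prod_smul_one_sub_adjMatrix_of_movesAlong x hσ, Perm.sign_of_cycleType, Perm.sum_cycleType]
    push_cast
    rw [← mul_assoc, ← pow_add, add_right_comm, pow_add, Even.neg_one_pow ⟨_, rfl⟩, one_mul]
  · rw [prod_smul_one_sub_adjMatrix_of_not_movesAlong x hσ, mul_zero]

theorem sachs_expansion_general (x : R) :
    (x • (1 : Matrix V V R) - G.adjMatrix R).det = ∑ᶠ (H : G.Subgraph) (_ : IsElementary H),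
      (-1 : R) ^ numComp H * 2 ^ numCycComp H * x ^ (Fintype.card V - H.verts.ncard) := by
  classical
  have := Fintype.ofFinite G.Subgraph
  simp only [finsum_eq_sum_of_fintype, finsum_eq_if]
  rw [← Finset.sum_filter, det_smul_one_sub_adjMatrix,
    ← Finset.sum_fiberwise_of_maps_to (g := cycleSubgraph G) (t := {H | IsElementary H})
      fun σ hσ => by
        simpa using (isOrientation_cycleSubgraph (Finset.mem_filter.1 hσ).2).isElementary]
  refine Finset.sum_congr rfl fun H hH => ?_
  rw [← IsElementary.sum_isOrientation (Finset.mem_filter.1 hH).2, Finset.filter_filter]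
  simp only [isOrientation_iff]

end Leibniz

theorem sachs_expansion [Fintype V] [DecidableEq V] (G : SimpleGraph V) [DecidableRel G.Adj]
    (x : ℂ) :
    charFun G x = ∑ᶠ (H : G.Subgraph) (_ : IsElementary H),
      (-1 : ℂ) ^ numComp H * 2 ^ numCycComp H * x ^ (Fintype.card V - H.verts.ncard) :=
  sachs_expansion_general G x
end

section
/- Let G be a unicyclic graph of order n whose unique cycle has length k with k ≡ 3 (mod 4). Then s⁺(G) > n > s⁻(G). -/
variable {V : Type*}

/-! Since `s⁺ + s⁻ = ∑ λ² = 2n`, it suffices to show that `s⁺ - s⁻ = ∑ λ |λ|` is positive. As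
`∑ λ = 0`, the function `T ↦ ∑ arctanPotential λ T`, which goes from `π / 4 * ∑ λ |λ|` at `0⁺` to
`0` at infinity, has derivative `T * ∑ arctan (λ / T)`; so it is enough that these angle sums are
negative. They tend to `0` at infinity, hence by continuity it is enough that their sines are
negative, that is, `Im det (T + i A) < 0` for every `T > 0`.

Deleting an edge `ab` of the cycle leaves a forest `F`. Conjugation by the phases `1, i` of a
two-colouring of `F` turns `T + i A(F)` into `N = T + S` with `S` real and skew-symmetric, and it
fixes the remaining entries `i` at `(a, b)` and `(b, a)`, because `a` and `b` have the same colour.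
A rank-two update then gives `Im det (T + i A) = det N * (N⁻¹ a b + N⁻¹ b a)`. Here `det N > 0`,
and since the symmetric part of `N` is positive definite, the sign of `N⁻¹ a b` is that of the
product of the entries of `-N` along the path from `a` to `b`: negative when its length is
`2` modulo `4`.
-/

open Filter Matrix Set
open scoped Topology

section Analysis

theorem neg_of_sin_neg_of_tendsto_zero {θ : ℝ → ℝ} {a : ℝ} (hθ : ContinuousOn θ (Ioi a))
    (hlim : Tendsto θ atTop (𝓝 0)) (hsin : ∀ t, a < t → Real.sin (θ t) < 0) {t : ℝ} (ht : a < t) :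
    θ t < 0 := by
  by_contra! hpos
  obtain ⟨T, hTπ, htT⟩ : ∃ T, θ T < Real.pi ∧ t < T :=
    ((hlim.eventually_lt_const Real.pi_pos).and (eventually_gt_atTop t)).exists
  have hTneg : θ T < 0 := by
    by_contra! h
    exact (hsin T (ht.trans htT)).not_ge (Real.sin_nonneg_of_nonneg_of_le_pi h hTπ.le)
  obtain ⟨s, hs, hs0⟩ := intermediate_value_Icc' htT.le
    (hθ.mono fun x hx => ht.trans_le hx.1) ⟨hTneg.le, hpos⟩
  simpa [hs0] using hsin s (ht.trans_le hs.1)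

theorem lt_of_strictAntiOn_Ioi_of_tendsto {α β : Type*} [LinearOrder α] [TopologicalSpace α]
    [OrderTopology α] [DenselyOrdered α] [NoMaxOrder α] [LinearOrder β] [TopologicalSpace β]
    [OrderClosedTopology β] {f : α → β} {a : α} {l r : β} (hf : StrictAntiOn f (Ioi a))
    (hl : Tendsto f (𝓝[>] a) (𝓝 l)) (hr : Tendsto f atTop (𝓝 r)) : r < l := by
  have : Nonempty α := ⟨a⟩
  obtain ⟨b, hab⟩ := exists_gt a
  obtain ⟨c, hbc⟩ := exists_gt b
  have hrc : r ≤ f c := le_of_tendsto hr <| (eventually_ge_atTop c).mono fun x hx =>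
    hf.antitoneOn (hab.trans hbc) ((hab.trans hbc).trans_le hx) hx
  have hbl : f b ≤ l := ge_of_tendsto hl <| mem_of_superset (Ioo_mem_nhdsGT hab) fun x hx =>
    hf.antitoneOn hx.1 hab hx.2.le
  exact hrc.trans_lt ((hf hab (hab.trans hbc) hbc).trans_le hbl)

theorem arctan_le_self {x : ℝ} (hx : 0 ≤ x) : Real.arctan x ≤ x := by
  simpa only [Real.tan_arctan] using
    Real.le_tan (Real.arctan_nonneg.2 hx) (Real.arctan_lt_pi_div_two x)

theorem div_one_add_sq_le_arctan {x : ℝ} (hx : 0 ≤ x) : x / (1 + x ^ 2) ≤ Real.arctan x := by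
  have hsin : Real.sin (2 * Real.arctan x) ≤ 2 * Real.arctan x :=
    Real.sin_le (by simpa using hx)
  have hsqrt : √(1 + x ^ 2) ^ 2 = 1 + x ^ 2 := Real.sq_sqrt (by positivity)
  rw [Real.sin_two_mul, Real.sin_arctan, Real.cos_arctan] at hsin
  calc x / (1 + x ^ 2) = x / √(1 + x ^ 2) * (1 / √(1 + x ^ 2)) := by
        rw [div_mul_div_comm, mul_one, ← sq, hsqrt]
    _ ≤ Real.arctan x := by linarith

/-- An antiderivative in `T` of `T * arctan (l / T) - l`, normalised to vanish at infinity. Its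
limit at `0⁺` is `π / 4 * (l * |l|)`, so it links signed squares to sums of angles. -/
noncomputable def arctanPotential (l T : ℝ) : ℝ :=
  ((T ^ 2 + l ^ 2) * Real.arctan (l / T) - T * l) / 2

theorem hasDerivAt_arctanPotential (l : ℝ) {T : ℝ} (hT : T ≠ 0) :
    HasDerivAt (arctanPotential l) (T * Real.arctan (l / T) - l) T := by
  have hquot : HasDerivAt (fun T : ℝ => l / T) (-l / T ^ 2) T := by
    simpa [div_eq_mul_inv] using (hasDerivAt_inv hT).const_mul l
  have hsq : HasDerivAt (fun T : ℝ => T ^ 2 + l ^ 2) (2 * T) T := by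
    simpa using (hasDerivAt_pow 2 T).add_const (l ^ 2)
  refine (((hsq.mul hquot.arctan).sub ((hasDerivAt_id T).mul_const l)).div_const 2).congr_deriv ?_
  have : T ^ 2 + l ^ 2 ≠ 0 := by positivity
  field_simp
  ring

theorem arctanPotential_neg (l T : ℝ) : arctanPotential (-l) T = -arctanPotential l T := by
  simp only [arctanPotential, neg_div, Real.arctan_neg]
  ring

theorem abs_arctanPotential_le (l : ℝ) {T : ℝ} (hT : 0 < T) :
    |arctanPotential l T| ≤ |l| ^ 3 / 2 / T := by
  wlog hl : 0 ≤ l generalizing l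
  · simpa [arctanPotential_neg] using this (-l) (by linarith)
  have hlow := mul_le_mul_of_nonneg_left (div_one_add_sq_le_arctan (div_nonneg hl hT.le))
    (show 0 ≤ T ^ 2 + l ^ 2 by positivity)
  have hupp := mul_le_mul_of_nonneg_left (arctan_le_self (div_nonneg hl hT.le))
    (show 0 ≤ T ^ 2 + l ^ 2 by positivity)
  have hlow' : (T ^ 2 + l ^ 2) * (l / T / (1 + (l / T) ^ 2)) = T * l := by field_simp
  have hupp' : (T ^ 2 + l ^ 2) * (l / T) = T * l + l ^ 3 / T := by field_simp
  rw [abs_of_nonneg hl, div_right_comm, arctanPotential, abs_of_nonneg (by linarith)]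
  linarith

theorem tendsto_arctanPotential_atTop (l : ℝ) : Tendsto (arctanPotential l) atTop (𝓝 0) :=
  squeeze_zero_norm' ((eventually_gt_atTop 0).mono fun _ hT => abs_arctanPotential_le l hT)
    (tendsto_const_nhds.div_atTop tendsto_id)

theorem tendsto_arctanPotential_nhdsGT_zero (l : ℝ) :
    Tendsto (arctanPotential l) (𝓝[>] 0) (𝓝 (Real.pi / 4 * (l * |l|))) := by
  wlog hl : 0 ≤ l generalizing l
  · have hneg := (this (-l) (by linarith)).neg
    simp only [arctanPotential_neg, neg_neg, abs_neg] at hneg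
    convert hneg using 2
    ring
  rcases hl.eq_or_lt with rfl | hl
  · have hzero : arctanPotential 0 = fun _ => 0 := by ext; simp [arctanPotential]
    simp [hzero]
  have hangle : Tendsto (fun T : ℝ => Real.arctan (l / T)) (𝓝[>] 0) (𝓝 (Real.pi / 2)) :=
    (Real.tendsto_arctan_atTop.mono_right nhdsWithin_le_nhds).comp
      (tendsto_inv_nhdsGT_zero.const_mul_atTop hl)
  have hid : Tendsto (fun T : ℝ => T) (𝓝[>] 0) (𝓝 0) := tendsto_id.mono_left nhdsWithin_le_nhds
  have hvalue : Real.pi / 4 * (l * |l|) = ((0 ^ 2 + l ^ 2) * (Real.pi / 2) - 0 * l) / 2 := by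
    rw [abs_of_pos hl]
    ring
  rw [hvalue]
  exact ((((hid.pow 2).add_const (l ^ 2)).mul hangle).sub (hid.mul_const l)).div_const 2

theorem sum_mul_abs_pos_of_sum_arctan_neg {ι : Type*} [Fintype ι] {l : ι → ℝ}
    (hsum : ∑ i, l i = 0) (hangle : ∀ T, 0 < T → ∑ i, Real.arctan (l i / T) < 0) :
    0 < ∑ i, l i * |l i| := by
  have hderiv : ∀ T, 0 < T → HasDerivAt (fun T => ∑ i, arctanPotential (l i) T)
      (T * ∑ i, Real.arctan (l i / T)) T := fun T hT => by
    refine (HasDerivAt.fun_sum fun i _ => hasDerivAt_arctanPotential (l i) hT.ne').congr_deriv ?_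
    rw [Finset.sum_sub_distrib, hsum, sub_zero, Finset.mul_sum]
  have hanti : StrictAntiOn (fun T => ∑ i, arctanPotential (l i) T) (Ioi 0) := by
    refine strictAntiOn_of_deriv_neg (convex_Ioi 0)
      (fun T hT => (hderiv T hT).continuousAt.continuousWithinAt) fun T hT => ?_
    rw [interior_Ioi] at hT
    rw [(hderiv T hT).deriv]
    exact mul_neg_of_pos_of_neg hT (hangle T hT)
  have hlt := lt_of_strictAntiOn_Ioi_of_tendsto hanti
    (tendsto_finsetSum _ fun i _ => tendsto_arctanPotential_nhdsGT_zero (l i))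
    (tendsto_finsetSum _ fun i _ => tendsto_arctanPotential_atTop (l i))
  rw [Finset.sum_const_zero, ← Finset.mul_sum] at hlt
  exact pos_of_mul_pos_right hlt (by positivity)

theorem im_prod_eq_prod_norm_mul_sin_sum_arg {ι : Type*} (s : Finset ι) (z : ι → ℂ) :
    (∏ i ∈ s, z i).im = (∏ i ∈ s, ‖z i‖) * Real.sin (∑ i ∈ s, (z i).arg) := by
  have hpolar : ∏ i ∈ s, z i =
      (∏ i ∈ s, ‖z i‖ : ℝ) * Complex.exp ((∑ i ∈ s, (z i).arg : ℝ) * Complex.I) := by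
    push_cast
    rw [Finset.sum_mul, Complex.exp_sum, ← Finset.prod_mul_distrib]
    exact Finset.prod_congr rfl fun i _ => (Complex.norm_mul_exp_arg_mul_I (z i)).symm
  rw [hpolar, Complex.im_ofReal_mul, Complex.exp_ofReal_mul_I_im]

theorem arg_eq_arctan_of_re_pos {z : ℂ} (hz : 0 < z.re) : z.arg = Real.arctan (z.im / z.re) := by
  have harg := abs_lt.1 (Complex.abs_arg_lt_pi_div_two_iff.2 (.inl hz))
  rw [← Complex.tan_arg, Real.arctan_tan harg.1 harg.2]

theorem sum_arctan_div_neg_of_im_prod_neg {ι : Type*} [Fintype ι] {l : ι → ℝ}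
    (him : ∀ t : ℝ, 0 < t → (∏ i, (t + Complex.I * l i)).im < 0) {t : ℝ} (ht : 0 < t) :
    ∑ i, Real.arctan (l i / t) < 0 := by
  refine neg_of_sin_neg_of_tendsto_zero (θ := fun t => ∑ i, Real.arctan (l i / t)) ?_ ?_ ?_ ht
  · exact continuousOn_finsetSum _ fun i _ => Real.continuous_arctan.comp_continuousOn
      (continuousOn_const.div continuousOn_id fun _ hx => (mem_Ioi.1 hx).ne')
  · simpa using tendsto_finsetSum Finset.univ fun i _ => (Real.continuous_arctan.tendsto 0).comp
      (tendsto_const_nhds.div_atTop tendsto_id : Tendsto (fun t : ℝ => l i / t) atTop (𝓝 0))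
  · intro t ht
    have harg : ∀ i, (t + Complex.I * l i).arg = Real.arctan (l i / t) := fun i => by
      rw [arg_eq_arctan_of_re_pos (by simpa using ht)]
      simp
    have hprod := him t ht
    simp only [im_prod_eq_prod_norm_mul_sin_sum_arg, harg] at hprod
    exact neg_of_mul_neg_right hprod (Finset.prod_nonneg fun _ _ => norm_nonneg _)

end Analysis

section Accretive

variable {n R : Type*} [Fintype n]

/-- A square matrix with positive definite quadratic form; no symmetry is required, which is what
distinguishes this from `Matrix.PosDef`. -/
def IsStrictlyAccretive [CommRing R] [PartialOrder R] (N : Matrix n n R) : Prop :=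
  ∀ x : n → R, x ≠ 0 → 0 < x ⬝ᵥ N *ᵥ x

namespace IsStrictlyAccretive

section OrderedRing

variable [CommRing R] [LinearOrder R] [IsStrictOrderedRing R] {N : Matrix n n R}

theorem det_ne_zero [DecidableEq n] (hN : IsStrictlyAccretive N) : N.det ≠ 0 := by
  intro hdet
  obtain ⟨x, hx, hNx⟩ := Matrix.exists_mulVec_eq_zero_iff.2 hdet
  simpa [hNx] using hN x hx

theorem smul_one_add_of_transpose_eq_neg [DecidableEq n] {S : Matrix n n R} (hS : Sᵀ = -S) {t : R}
    (ht : 0 < t) : IsStrictlyAccretive (t • 1 + S) := by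
  intro x hx
  have hskew : x ⬝ᵥ S *ᵥ x = -(x ⬝ᵥ S *ᵥ x) := by
    conv_lhs => rw [dotProduct_mulVec, ← mulVec_transpose, hS, neg_mulVec, neg_dotProduct,
      dotProduct_comm]
  have hxx : 0 < x ⬝ᵥ x :=
    (Finset.sum_nonneg fun i _ => mul_self_nonneg (x i)).lt_of_ne' fun h =>
      hx (dotProduct_self_eq_zero.1 h)
  rw [add_mulVec, smul_mulVec, one_mulVec, dotProduct_add, dotProduct_smul,
    self_eq_neg.1 hskew, add_zero]
  exact mul_pos ht hxx

theorem sign_apply_eq_sign_mulVec_apply (hN : IsStrictlyAccretive N) {z : n → R} {a : n}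
    (hz : ∀ x, x ≠ a → z x * (N *ᵥ z) x = 0) :
    SignType.sign (z a) = SignType.sign ((N *ᵥ z) a) := by
  rcases eq_or_ne z 0 with rfl | hne
  · simp
  have hpos := hN z hne
  rw [dotProduct, Fintype.sum_eq_single a hz] at hpos
  rcases pos_and_pos_or_neg_and_neg_of_mul_pos hpos with ⟨h₁, h₂⟩ | ⟨h₁, h₂⟩
  · rw [sign_pos h₁, sign_pos h₂]
  · rw [sign_neg h₁, sign_neg h₂]

/-- The vector cut off outside `K` solves a system whose only source, at `a`, is the flow out
of `K`. -/
theorem sign_apply_eq_of_forall_exit (hN : IsStrictlyAccretive N) {K : Set n} {a b : n}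
    (ha : a ∈ K) (hb : b ∉ K) (hexit : ∀ x ∈ K, ∀ y ∉ K, N x y ≠ 0 → x = a ∧ y = b)
    {v : n → R} (hv : ∀ x ∈ K, (N *ᵥ v) x = 0) :
    SignType.sign (v a) = SignType.sign (-N a b) * SignType.sign (v b) := by
  have hcut : ∀ x ∈ K, (N *ᵥ K.indicator v) x = -(N x b * v b) := by
    intro x hx
    have hcompl : (N *ᵥ Kᶜ.indicator v) x = N x b * v b := by
      rw [mulVec, dotProduct, Fintype.sum_eq_single b, Set.indicator_of_mem hb]
      intro y hyb
      by_cases hy : y ∈ K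
      · rw [Set.indicator_of_notMem (Set.notMem_compl_iff.2 hy), mul_zero]
      · rw [by_contra fun h => hyb (hexit x hx y hy h).2, zero_mul]
    rw [← hcompl, eq_neg_iff_add_eq_zero, ← Pi.add_apply, ← mulVec_add,
      Set.indicator_self_add_compl, hv x hx]
  have hz : ∀ x, x ≠ a → K.indicator v x * (N *ᵥ K.indicator v) x = 0 := by
    intro x hxa
    by_cases hx : x ∈ K
    · have hxb : N x b = 0 := by
        by_contra h
        exact hxa (hexit x hx b hb h).1
      rw [hcut x hx, hxb, zero_mul, neg_zero, mul_zero]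
    · rw [Set.indicator_of_notMem hx, zero_mul]
  have hsign := hN.sign_apply_eq_sign_mulVec_apply hz
  rwa [Set.indicator_of_mem ha, hcut a ha, ← neg_mul, sign_mul] at hsign

end OrderedRing

theorem convex_setOf : Convex ℝ {N : Matrix n n ℝ | IsStrictlyAccretive N} := by
  intro M hM N hN a b ha hb hab x hx
  rw [add_mulVec, smul_mulVec, smul_mulVec, dotProduct_add, dotProduct_smul, dotProduct_smul]
  exact convex_Ioi (0 : ℝ) (hM x hx) (hN x hx) ha hb hab

theorem det_pos [DecidableEq n] {N : Matrix n n ℝ} (hN : IsStrictlyAccretive N) : 0 < N.det := by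
  have hone : IsStrictlyAccretive (1 : Matrix n n ℝ) := by
    simpa using smul_one_add_of_transpose_eq_neg (S := (0 : Matrix n n ℝ)) (by simp) one_pos
  by_contra! hdet
  obtain ⟨M, hM, hM0⟩ := convex_setOf.isPreconnected.intermediate_value hN hone
    (f := Matrix.det) continuous_id.matrix_det.continuousOn ⟨hdet, by simp⟩
  exact det_ne_zero hM hM0

end IsStrictlyAccretive

end Accretive

section RankTwoUpdate

theorem det_add_single_add_single {n R : Type*} [Fintype n] [DecidableEq n] [CommRing R]
    {A : Matrix n n R} (hA : IsUnit A.det) (a b : n) (r s : R) :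
    (A + (single a b r + single b a s)).det =
      A.det * ((1 + r * A⁻¹ b a) * (1 + s * A⁻¹ a b) - r * s * (A⁻¹ a a * A⁻¹ b b)) := by
  let U : Matrix n (Fin 2) R := of fun x j => if x = ![a, b] j then ![r, s] j else 0
  let W : Matrix (Fin 2) n R := of fun j y => if y = ![b, a] j then 1 else 0
  have hUW : single a b r + single b a s = U * W := by
    ext x y
    simp only [U, W, Matrix.add_apply, Matrix.mul_apply, Matrix.single_apply, of_apply,
      Fin.sum_univ_two, cons_val_zero, cons_val_one, ite_zero_mul_ite_zero, mul_one, eq_comm]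
  have hent : ∀ i j, (W * A⁻¹ * U) i j = A⁻¹ (![b, a] i) (![a, b] j) * ![r, s] j := by
    simp [Matrix.mul_apply, U, W]
  rw [hUW, Matrix.det_add_mul U W hA, Matrix.det_fin_two]
  simp only [Matrix.add_apply, hent, Matrix.one_apply_eq, cons_val_zero, cons_val_one]
  rw [Matrix.one_apply_ne (by decide), Matrix.one_apply_ne (by decide)]
  ring

theorem im_det_map_add_single_I {n : Type*} [Fintype n] [DecidableEq n] {N : Matrix n n ℝ}
    (hN : N.det ≠ 0) (a b : n) :
    (N.map Complex.ofRealHom + (single a b Complex.I + single b a Complex.I)).det.im =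
      N.det * (N⁻¹ a b + N⁻¹ b a) := by
  have hdet : (N.map Complex.ofRealHom).det = N.det := (Complex.ofRealHom.map_det N).symm
  have hinv : (N.map Complex.ofRealHom)⁻¹ = N⁻¹.map Complex.ofRealHom := by
    refine Matrix.inv_eq_right_inv ?_
    rw [← Matrix.map_mul, Matrix.mul_nonsing_inv _ hN.isUnit]
    simp
  rw [det_add_single_add_single (by simpa [hdet] using hN), hdet, hinv, Complex.im_ofReal_mul]
  simp [add_comm]

end RankTwoUpdate

section Spectral

variable {n 𝕜 : Type*} [Fintype n] [DecidableEq n] [RCLike 𝕜]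

theorem trace_pow_eq_sum_eigenvalues_pow {A : Matrix n n 𝕜} (hA : A.IsHermitian) (k : ℕ) :
    (A ^ k).trace = ∑ i, (hA.eigenvalues i : 𝕜) ^ k := by
  conv_lhs => rw [hA.spectral_theorem, ← map_pow, Unitary.conjStarAlgAut_apply,
    trace_mul_comm, ← mul_assoc]
  simp [Matrix.diagonal_pow, trace_diagonal]

theorem det_smul_one_add_smul_map {R : Type*} [CommRing R] {A : Matrix n n 𝕜}
    (hA : A.IsHermitian) (f : 𝕜 →+* R) (z w : R) :
    (z • 1 + w • A.map f).det = ∏ i, (z + w * f (hA.eigenvalues i)) := by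
  set U := f.mapMatrix (hA.eigenvectorUnitary : Matrix n n 𝕜)
  set W := f.mapMatrix (star (hA.eigenvectorUnitary : Matrix n n 𝕜))
  have hUW : U * W = 1 := by
    rw [← map_mul, Unitary.mul_star_self_of_mem hA.eigenvectorUnitary.2, map_one]
  have hspec : A.map f = U * diagonal (fun i => f (hA.eigenvalues i)) * W := by
    conv_lhs => rw [hA.spectral_theorem, Unitary.conjStarAlgAut_apply]
    rw [Matrix.map_mul, Matrix.map_mul, diagonal_map (map_zero f)]
    rfl
  calc (z • 1 + w • A.map f).det
      = (U * (z • 1 + w • diagonal fun i => f (hA.eigenvalues i)) * W).det := by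
        rw [hspec, mul_add, add_mul, Matrix.mul_smul, Matrix.smul_mul, mul_one, hUW,
          Matrix.mul_smul, Matrix.smul_mul]
    _ = (diagonal fun i => z + w * f (hA.eigenvalues i)).det := by
        rw [det_conj_of_mul_eq_one hUW (mul_eq_one_comm.1 hUW), smul_one_eq_diagonal,
          ← diagonal_smul, diagonal_add]
        rfl
    _ = ∏ i, (z + w * f (hA.eigenvalues i)) := det_diagonal

end Spectral

section Forest

open SimpleGraph

theorem IsStrictlyAccretive.sign_inv_apply_eq_sign_prod_darts {R : Type*} [Field R] [LinearOrder R]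
    [IsStrictOrderedRing R] [Fintype V] [DecidableEq V] {F : SimpleGraph V} (hF : F.IsAcyclic)
    {N : Matrix V V R} (hN : IsStrictlyAccretive N) (hNF : ∀ x y, N x y ≠ 0 → x = y ∨ F.Adj x y)
    {u w : V} {p : F.Walk u w} (hp : p.IsPath) :
    SignType.sign (N⁻¹ u w) =
      SignType.sign (p.darts.map fun d => -N d.fst d.snd).prod := by
  have hcol : ∀ x, (N *ᵥ N⁻¹.col w) x = (1 : Matrix V V R) x w := fun x => by
    rw [← Matrix.mul_nonsing_inv N hN.det_ne_zero.isUnit]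
    rfl
  induction p with
  | @nil w =>
    simpa [hcol] using hN.sign_apply_eq_sign_mulVec_apply (z := N⁻¹.col w) (a := w)
      fun x hx => by rw [hcol, Matrix.one_apply_ne hx, mul_zero]
  | @cons a b w hab p ih =>
    rw [Walk.cons_isPath_iff] at hp
    have hbridge := isBridge_iff.1 (isAcyclic_iff_forall_adj_isBridge.1 hF hab)
    have hbw : (F.deleteEdges {s(a, b)}).Reachable b w :=
      ⟨p.toDeleteEdge s(a, b) fun h => hp.2 (p.fst_mem_support_of_mem_edges h)⟩
    rw [Walk.darts_cons, List.map_cons, List.prod_cons, sign_mul, ← ih hp.1 hcol]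
    refine hN.sign_apply_eq_of_forall_exit (K := {x | (F.deleteEdges {s(a, b)}).Reachable a x})
      (v := N⁻¹.col w) (Reachable.refl a) hbridge ?_ ?_
    · intro x hx y hy hxy
      have hadj : F.Adj x y := (hNF x y hxy).resolve_left fun h => hy (h ▸ hx)
      have hedge : s(x, y) = s(a, b) := by
        by_contra hne
        exact hy (Reachable.trans hx (Adj.reachable (deleteEdges_adj.2 ⟨hadj, hne⟩)))
      rcases Sym2.eq_iff.1 hedge with h | ⟨-, rfl⟩
      · exact h
      · exact absurd (Reachable.refl y) hy
    · intro x hx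
      rw [hcol, Matrix.one_apply_ne]
      rintro rfl
      exact hbridge (Reachable.trans hx hbw.symm)

variable {F : SimpleGraph V} (C : F.Coloring Bool)

/-- The signs `±1` of the two colour classes. -/
def colorSign (x : V) : ℝ := if C x then -1 else 1

/-- The phases `1, i` of the two colour classes. Conjugation by them turns `i * A` into the real
matrix `skewAdjMatrix C`. -/
noncomputable def colorPhase (x : V) : ℂ := if C x then 1 else Complex.I

theorem colorSign_ne_zero (x : V) : colorSign C x ≠ 0 := by
  unfold colorSign
  split_ifs <;> norm_num

theorem colorSign_eq_neg_of_adj {x y : V} (h : F.Adj x y) : colorSign C y = -colorSign C x := by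
  have hvalid := C.valid h
  cases hx : C x <;> cases hy : C y <;> simp_all [colorSign]

theorem conj_colorPhase_mul_self (x : V) : star (colorPhase C x) * colorPhase C x = 1 := by
  unfold colorPhase
  split_ifs <;> simp

theorem conj_colorPhase_single [Fintype V] [DecidableEq V] {a b : V} (hab : C a = C b) (z : ℂ) :
    diagonal (star (colorPhase C)) * single a b z * diagonal (colorPhase C) = single a b z := by
  have hphase : colorPhase C b = colorPhase C a := by simp only [colorPhase, hab]
  ext x y
  rw [mul_diagonal, diagonal_mul, single_apply]
  split_ifs with h
  · rw [← h.1, ← h.2, hphase, mul_right_comm, Pi.star_apply, conj_colorPhase_mul_self, one_mul]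
  · rw [mul_zero, zero_mul]

theorem conj_colorPhase_mul_I_mul_colorPhase_of_adj {x y : V} (h : F.Adj x y) :
    star (colorPhase C x) * Complex.I * colorPhase C y = colorSign C x := by
  have hvalid := C.valid h
  cases hx : C x <;> cases hy : C y <;> simp_all [colorSign, colorPhase]

theorem prod_darts_neg_colorSign {u w : V} (p : F.Walk u w) :
    (p.darts.map fun d => -colorSign C d.fst).prod =
      (-colorSign C u) ^ p.length * (-1) ^ p.length.choose 2 := by
  induction p with
  | nil => simp
  | @cons a _ _ h p ih =>
    rw [Walk.darts_cons, List.map_cons, List.prod_cons, ih, Walk.length_cons,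
      Nat.choose_succ_succ' _ 1, Nat.choose_one_right, colorSign_eq_neg_of_adj C h, neg_neg,
      pow_succ, pow_add, neg_pow (colorSign C _)]
    have hsq : ((-1 : ℝ) ^ p.length) ^ 2 = 1 := by rw [← pow_mul, pow_mul', neg_one_sq, one_pow]
    linear_combination (colorSign C a * colorSign C a ^ p.length * (-1) ^ p.length.choose 2) * hsq

variable [DecidableRel F.Adj]

/-- The adjacency matrix of a two-coloured graph with its rows scaled by `colorSign`, which makes
it skew-symmetric. -/
def skewAdjMatrix : Matrix V V ℝ := of fun x y => if F.Adj x y then colorSign C x else 0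

theorem skewAdjMatrix_apply_of_adj {x y : V} (h : F.Adj x y) :
    skewAdjMatrix C x y = colorSign C x :=
  if_pos h

theorem skewAdjMatrix_apply_of_not_adj {x y : V} (h : ¬F.Adj x y) : skewAdjMatrix C x y = 0 :=
  if_neg h

theorem transpose_skewAdjMatrix : (skewAdjMatrix C)ᵀ = -skewAdjMatrix C := by
  ext x y
  rw [transpose_apply, Matrix.neg_apply]
  by_cases h : F.Adj x y
  · rw [skewAdjMatrix_apply_of_adj C h, skewAdjMatrix_apply_of_adj C h.symm,
      colorSign_eq_neg_of_adj C h]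
  · rw [skewAdjMatrix_apply_of_not_adj C h, skewAdjMatrix_apply_of_not_adj C fun h' => h h'.symm,
      neg_zero]

variable [Fintype V] [DecidableEq V]

theorem isStrictlyAccretive_smul_one_add_skewAdjMatrix {t : ℝ} (ht : 0 < t) :
    IsStrictlyAccretive (t • 1 + skewAdjMatrix C) :=
  .smul_one_add_of_transpose_eq_neg (transpose_skewAdjMatrix C) ht

theorem inv_smul_one_add_skewAdjMatrix_apply_neg (hF : F.IsAcyclic) {t : ℝ} (ht : 0 < t) {u w : V}
    {p : F.Walk u w} (hp : p.IsPath) (hlen : p.length % 4 = 2) :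
    (t • 1 + skewAdjMatrix C)⁻¹ u w < 0 := by
  have hentry : ∀ d : F.Dart, (t • 1 + skewAdjMatrix C) d.fst d.snd = colorSign C d.fst := fun d =>
    by simp [Matrix.one_apply_ne d.adj.ne, skewAdjMatrix_apply_of_adj C d.adj]
  have hsupp : ∀ x y, (t • 1 + skewAdjMatrix C) x y ≠ 0 → x = y ∨ F.Adj x y := by
    intro x y
    contrapose!
    rintro ⟨hne, hadj⟩
    simp [Matrix.one_apply_ne hne, skewAdjMatrix_apply_of_not_adj C hadj]
  have heven : Even p.length := Nat.even_iff.2 (by omega)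
  have hodd : Odd (p.length.choose 2) := by
    obtain ⟨q, hq⟩ : ∃ q, p.length = 2 * (2 * q + 1) := ⟨p.length / 4, by omega⟩
    rw [Nat.choose_two_right, hq, mul_assoc, Nat.mul_div_cancel_left _ two_pos]
    exact Odd.mul ⟨q, rfl⟩ ⟨2 * q, by omega⟩
  have hsign := (isStrictlyAccretive_smul_one_add_skewAdjMatrix C
    ht).sign_inv_apply_eq_sign_prod_darts hF hsupp hp
  simp only [hentry, prod_darts_neg_colorSign, hodd.neg_one_pow, mul_neg_one] at hsign
  rw [← sign_eq_neg_one_iff, hsign, sign_eq_neg_one_iff, neg_lt_zero]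
  exact heven.pow_pos (neg_ne_zero.2 (colorSign_ne_zero C u))

theorem conj_colorPhase_smul_one_add_I_smul_adjMatrix (t : ℝ) :
    diagonal (star (colorPhase C)) *
        ((t : ℂ) • (1 : Matrix V V ℂ) + Complex.I • (F.adjMatrix ℝ).map Complex.ofRealHom) *
        diagonal (colorPhase C) =
      (t • 1 + skewAdjMatrix C).map Complex.ofRealHom := by
  ext x y
  rw [mul_diagonal, diagonal_mul]
  by_cases h : F.Adj x y
  · simp [h, Matrix.one_apply_ne h.ne, skewAdjMatrix_apply_of_adj C h,
      ← conj_colorPhase_mul_I_mul_colorPhase_of_adj C h]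
  · rcases eq_or_ne x y with rfl | hne
    · simpa [skewAdjMatrix_apply_of_not_adj C h, mul_right_comm _ (t : ℂ)] using
        congrArg (· * (t : ℂ)) (conj_colorPhase_mul_self C x)
    · simp [h, Matrix.one_apply_ne hne, skewAdjMatrix_apply_of_not_adj C h]

theorem im_det_smul_one_add_I_smul_adjMatrix_add_single_neg (hF : F.IsAcyclic) {a b : V}
    {p : F.Walk a b} (hp : p.IsPath) (hlen : p.length % 4 = 2) {t : ℝ} (ht : 0 < t) :
    ((t : ℂ) • (1 : Matrix V V ℂ) + Complex.I •
      (F.adjMatrix ℝ + (single a b 1 + single b a 1)).map Complex.ofRealHom).det.im < 0 := by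
  obtain ⟨C⟩ : Nonempty (F.Coloring Bool) := ⟨hF.colorable_two.toColoring (by simp)⟩
  have hab : C a = C b :=
    Bool.eq_iff_iff.2 ((C.even_length_iff_congr p).1 (Nat.even_iff.2 (by omega)))
  have hN := isStrictlyAccretive_smul_one_add_skewAdjMatrix C ht
  have hphase : diagonal (star (colorPhase C)) * diagonal (colorPhase C) = 1 := by
    rw [diagonal_mul_diagonal, ← diagonal_one]
    exact congrArg diagonal (funext (conj_colorPhase_mul_self C))
  have hsplit : Complex.I • (F.adjMatrix ℝ + (single a b 1 + single b a 1)).map Complex.ofRealHom =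
      Complex.I • (F.adjMatrix ℝ).map Complex.ofRealHom +
        (single a b Complex.I + single b a Complex.I) := by
    simp [Matrix.map_add, smul_add, smul_single]
  rw [← det_conj_of_mul_eq_one hphase (mul_eq_one_comm.1 hphase), hsplit, ← add_assoc, mul_add,
    add_mul, conj_colorPhase_smul_one_add_I_smul_adjMatrix, mul_add, add_mul,
    conj_colorPhase_single C hab, conj_colorPhase_single C hab.symm,
    im_det_map_add_single_I hN.det_ne_zero]
  exact mul_neg_of_pos_of_neg hN.det_pos (add_neg
    (inv_smul_one_add_skewAdjMatrix_apply_neg C hF ht hp hlen)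
    (inv_smul_one_add_skewAdjMatrix_apply_neg C hF ht hp.reverse (by rwa [Walk.length_reverse])))

end Forest

section SquareEnergy

open SimpleGraph

variable [Fintype V] [DecidableEq V] (G : SimpleGraph V) [DecidableRel G.Adj]

theorem sum_eigenvalues_adjMatrix : ∑ i, (adjHerm G).eigenvalues i = 0 := by
  simpa using (adjHerm G).trace_eq_sum_eigenvalues.symm

theorem sum_eigenvalues_adjMatrix_sq :
    ∑ i, (adjHerm G).eigenvalues i ^ 2 = 2 * G.edgeFinset.card := by
  have htrace : ((G.adjMatrix ℝ) ^ 2).trace = 2 * G.edgeFinset.card := by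
    simp only [sq, Matrix.trace, Matrix.diag_apply, adjMatrix_mul_self_apply_self]
    exact_mod_cast G.sum_degrees_eq_twice_card_edges
  simpa [htrace] using (trace_pow_eq_sum_eigenvalues_pow (adjHerm G) 2).symm

theorem sPlus_add_sMinus : sPlus G + sMinus G = 2 * G.edgeFinset.card := by
  rw [← sum_eigenvalues_adjMatrix_sq, sPlus, sMinus, ← Finset.sum_add_distrib]
  refine Finset.sum_congr rfl fun i _ => ?_
  rcases lt_trichotomy ((adjHerm G).eigenvalues i) 0 with h | h | h
  · simp [h, h.le.not_gt]
  · simp [h]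
  · simp [h, h.le.not_gt]

theorem sPlus_sub_sMinus :
    sPlus G - sMinus G = ∑ i, (adjHerm G).eigenvalues i * |(adjHerm G).eigenvalues i| := by
  rw [sPlus, sMinus, ← Finset.sum_sub_distrib]
  refine Finset.sum_congr rfl fun i _ => ?_
  rcases lt_trichotomy ((adjHerm G).eigenvalues i) 0 with h | h | h
  · simp [h, h.le.not_gt, abs_of_neg h, sq]
  · simp [h]
  · simp [h, h.le.not_gt, abs_of_pos h, sq]

theorem sMinus_lt_sPlus_of_im_det_neg
    (h : ∀ t : ℝ, 0 < t → ((t : ℂ) • (1 : Matrix V V ℂ) +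
      Complex.I • (G.adjMatrix ℝ).map Complex.ofRealHom).det.im < 0) :
    sMinus G < sPlus G := by
  rw [← sub_pos, sPlus_sub_sMinus]
  refine sum_mul_abs_pos_of_sum_arctan_neg (sum_eigenvalues_adjMatrix G) fun T hT =>
    sum_arctan_div_neg_of_im_prod_neg (fun t ht => ?_) hT
  have hdet := h t ht
  rw [det_smul_one_add_smul_map (adjHerm G)] at hdet
  exact hdet

end SquareEnergy

section Unicyclic

open SimpleGraph

variable {G : SimpleGraph V} [DecidableRel G.Adj]

theorem adjMatrix_eq_adjMatrix_deleteEdges_add_single [DecidableEq V] {R : Type*}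
    [NonAssocSemiring R] {a b : V} (h : G.Adj a b) [DecidableRel (G.deleteEdges {s(a, b)}).Adj] :
    G.adjMatrix R = (G.deleteEdges {s(a, b)}).adjMatrix R + (single a b 1 + single b a 1) := by
  ext x y
  simp only [Matrix.add_apply, adjMatrix_apply, deleteEdges_adj, Set.mem_singleton_iff, Sym2.eq_iff,
    single_apply]
  by_cases h₁ : a = x ∧ b = y
  · obtain ⟨rfl, rfl⟩ := h₁
    simp [h, h.ne]
  · by_cases h₂ : b = x ∧ a = y
    · obtain ⟨rfl, rfl⟩ := h₂
      simp [h.symm, h.ne]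
    · have hne : ¬(x = a ∧ y = b ∨ x = b ∧ y = a) := by tauto
      simp [h₁, h₂, hne]

theorem isAcyclic_deleteEdges_of_isCycle [Fintype V] (hconn : G.Connected)
    (hedge : G.edgeFinset.card = Fintype.card V) {v : V} {c : G.Walk v v} (hc : c.IsCycle)
    {e : Sym2 V} (he : e ∈ c.edges) : (G.deleteEdges {e}).IsAcyclic := by
  refine (isTree_iff_connected_and_card.2 ⟨?_, ?_⟩).isAcyclic
  · induction e with | _ x y =>
    exact hconn.connected_delete_edge_of_not_isBridge fun hb => hb.notMem_edges_of_isCycle hc he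
  · rw [edgeSet_deleteEdges, Nat.card_coe_set_eq, Nat.card_eq_fintype_card, ← hedge,
      Set.ncard_sdiff_singleton_add_one (c.edges_subset_edgeSet he), ← coe_edgeFinset,
      Set.ncard_coe_finset]

theorem unicyclic_three_mod_four_general [Fintype V] [DecidableEq V] {v : V} {c : G.Walk v v}
    (hc : c.IsCycle) (hk : c.length % 4 = 3) (hF : (G.deleteEdges {s(v, c.snd)}).IsAcyclic) :
    (G.edgeFinset.card : ℝ) < sPlus G ∧ sMinus G < G.edgeFinset.card := by
  classical
  have hnil := hc.not_nil
  have hmem : s(v, c.snd) ∉ c.tail.edges :=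
    ((c.tail.cons_isCycle_iff _).1 ((c.cons_tail_eq hnil).symm ▸ hc)).2
  have hlen : (c.tail.toDeleteEdge _ hmem).length % 4 = 2 := by
    have htail := c.length_tail_add_one hnil
    rw [Walk.toDeleteEdge, Walk.toDeleteEdges, Walk.length_transfer]
    omega
  have hlt : sMinus G < sPlus G := sMinus_lt_sPlus_of_im_det_neg G fun t ht => by
    rw [adjMatrix_eq_adjMatrix_deleteEdges_add_single (c.adj_snd hnil), add_comm (single v _ _)]
    exact im_det_smul_one_add_I_smul_adjMatrix_add_single_neg hF
      (hc.isPath_tail.toDeleteEdges _ _ _) hlen ht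
  have hsum := sPlus_add_sMinus G
  constructor <;> linarith

end Unicyclic

/-- A unicyclic graph whose unique cycle has length `k ≡ 3 (mod 4)` satisfies
`s⁺(G) > n > s⁻(G)`. -/
theorem unicyclic_three_mod_four [Fintype V] [DecidableEq V] (G : SimpleGraph V)
    [DecidableRel G.Adj]
    (hconn : G.Connected) (hedge : G.edgeFinset.card = Fintype.card V)
    (v : V) (c : G.Walk v v) (hc : c.IsCycle) (hk : c.length % 4 = 3) :
    (Fintype.card V : ℝ) < sPlus G ∧ sMinus G < Fintype.card V :=
  hedge ▸ unicyclic_three_mod_four_general hc hk <|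
    isAcyclic_deleteEdges_of_isCycle hconn hedge hc
      (SimpleGraph.Walk.mk_start_snd_mem_edges hc.not_nil)
end
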